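/- Interior Hessian estimate for the positive σ_k-Yamabe equation (a priori form of Theorem 1.1). Let n ≥ 3, let Ω ⊆ ℝⁿ be a domain, let 2 ≤ k ≤ n and p > kn/2, and let f : Ω×(0,∞)×ℝⁿ → ℝ be positive and C¹ with locally Lipschitz first derivatives. Fix concentric open balls B_R ⊂ B_{2R} with closure(B_{2R}) ⊂ Ω and a constant M > 0. Then there exists a constant C, depending only on n, k, p, R, f and M, such that every positive u ∈ C²(Ω) satisfying σ_k(A_u(x)) = f(x,u(x),∇u(x))^k and λ(A_u(x)) ∈ Γ_k^+ for every x ∈ Ω, together with ‖ln u‖_{W^{2,p}(B_{2R})} ≤ M, obeys sup_{x ∈ B_R} |∇²u(x)| ≤ C. -/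

import Mathlib

open MeasureTheory Metric Set Matrix

noncomputable section

/-- The `k`-th elementary symmetric polynomial of the eigenvalues of an `n × n` real
matrix, defined via the coefficients of the characteristic polynomial. -/
def esymmMat {n : ℕ} (k : ℕ) (A : Matrix (Fin n) (Fin n) ℝ) : ℝ :=
  (-1 : ℝ) ^ k * A.charpoly.coeff (n - k)

/-- `λ(A) ∈ Γ_k^+`, i.e. `σ_j(A) > 0` for all `1 ≤ j ≤ k`. -/
def GammaPlus {n : ℕ} (k : ℕ) (A : Matrix (Fin n) (Fin n) ℝ) : Prop :=
  ∀ j : ℕ, 1 ≤ j → j ≤ k → 0 < esymmMat j A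

/-- The Newton tensors `T_0(A) = I`, `T_j(A) = σ_j(A) I - T_{j-1}(A) A`. -/
def newtonT {n : ℕ} : ℕ → Matrix (Fin n) (Fin n) ℝ → Matrix (Fin n) (Fin n) ℝ
  | 0, _ => 1
  | (j + 1), A => esymmMat (j + 1) A • (1 : Matrix (Fin n) (Fin n) ℝ) - newtonT j A * A

/-- `i`-th partial derivative. -/
def pd {n : ℕ} (i : Fin n) (w : (Fin n → ℝ) → ℝ) (x : Fin n → ℝ) : ℝ :=
  fderiv ℝ w x (Pi.single i 1)

/-- Gradient as a vector. -/
def grad {n : ℕ} (w : (Fin n → ℝ) → ℝ) (x : Fin n → ℝ) : Fin n → ℝ :=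
  fun i => pd i w x

/-- Hessian matrix. -/
def hess {n : ℕ} (w : (Fin n → ℝ) → ℝ) (x : Fin n → ℝ) : Matrix (Fin n) (Fin n) ℝ :=
  Matrix.of fun i j => pd i (pd j w) x

/-- Squared Euclidean norm of a vector. -/
def normSq {n : ℕ} (ξ : Fin n → ℝ) : ℝ := ∑ i, ξ i ^ 2

/-- Euclidean norm of a vector. -/
def vnorm {n : ℕ} (ξ : Fin n → ℝ) : ℝ := Real.sqrt (∑ i, ξ i ^ 2)

/-- Operator norm of a matrix, viewed as a linear map between Euclidean spaces. -/
def matNorm {n : ℕ} (M : Matrix (Fin n) (Fin n) ℝ) : ℝ :=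
  ‖LinearMap.toContinuousLinearMap (Matrix.toEuclideanLin M)‖

/-- Laplacian. -/
def lapl {n : ℕ} (w : (Fin n → ℝ) → ℝ) (x : Fin n → ℝ) : ℝ := ∑ l, pd l (pd l w) x

/-- `W^{2,p}` norm (with classical derivatives) on a set. -/
def W2pNorm {n : ℕ} (p : ℝ) (w : (Fin n → ℝ) → ℝ) (B : Set (Fin n → ℝ)) : ℝ :=
  (∫ x in B, (|w x| ^ p + vnorm (grad w x) ^ p + matNorm (hess w x) ^ p)) ^ (1 / p)

/-- `C^{1,1}_loc` on a set: continuously differentiable with locally Lipschitz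
first derivatives. -/
def C11On {E F : Type*} [NormedAddCommGroup E] [NormedSpace ℝ E]
    [NormedAddCommGroup F] [NormedSpace ℝ F] (f : E → F) (s : Set E) : Prop :=
  ContDiffOn ℝ 1 f s ∧
    ∀ x ∈ s, ∃ (K : NNReal) (t : Set E), t ∈ nhdsWithin x s ∧
      LipschitzOnWith K (fderivWithin ℝ f s) t

/-- First order difference quotient `∇_l^h`. -/
def dq {n : ℕ} (l : Fin n) (h : ℝ) (w : (Fin n → ℝ) → ℝ) (x : Fin n → ℝ) : ℝ :=
  (w (x + h • (Pi.single l 1 : Fin n → ℝ)) - w x) / h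

/-- Second order difference quotient `Δ_{ll}^h`. -/
def ddq {n : ℕ} (l : Fin n) (h : ℝ) (w : (Fin n → ℝ) → ℝ) (x : Fin n → ℝ) : ℝ :=
  (w (x + h • (Pi.single l 1 : Fin n → ℝ)) - 2 * w x + w (x - h • (Pi.single l 1 : Fin n → ℝ))) / h ^ 2

/-- `L^s` seminorm (as an extended real number) of a function on a set. -/
def lpN {n : ℕ} (s : ℝ) (w : (Fin n → ℝ) → ℝ) (S : Set (Fin n → ℝ)) : ENNReal :=
  (∫⁻ x in S, ENNReal.ofReal (|w x| ^ s)) ^ (1 / s)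

end


/-- Elementary symmetric polynomial over a finite set of indices. -/
noncomputable def elemS {ι : Type*} (S : Finset ι) (j : ℕ) (x : ι → ℝ) : ℝ :=
  ∑ T ∈ S.powersetCard j, ∏ i ∈ T, x i

/-- Membership of `x` restricted to `S` in the cone `Γ_k`. -/
def Gam {ι : Type*} (S : Finset ι) (k : ℕ) (x : ι → ℝ) : Prop :=
  ∀ j, j ≤ k → 0 < elemS S j x

theorem elemS_zero {ι : Type*} (S : Finset ι) (x : ι → ℝ) : elemS S 0 x = 1 := by
  simp [elemS]

theorem elemS_insert {ι : Type*} [DecidableEq ι] {S : Finset ι} {i : ι} (hi : i ∉ S) (j : ℕ)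
    (x : ι → ℝ) : elemS (insert i S) (j + 1) x = elemS S (j + 1) x + x i * elemS S j x := by
  unfold elemS
  rw [Finset.powersetCard_succ_insert hi, Finset.sum_union]
  · congr 1
    rw [Finset.sum_image, Finset.mul_sum]
    · refine Finset.sum_congr rfl fun T hT => ?_
      rw [Finset.prod_insert]
      exact fun h => hi ((Finset.mem_powersetCard.1 hT).1 h)
    · intro T hT T' hT' h
      have h1 : i ∉ T := fun h => hi ((Finset.mem_powersetCard.1 hT).1 h)
      have h2 : i ∉ T' := fun h => hi ((Finset.mem_powersetCard.1 hT').1 h)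
      rw [← Finset.erase_insert h1, ← Finset.erase_insert h2]
      rw [h]
  · rw [Finset.disjoint_left]
    intro T hT hT'
    obtain ⟨T', -, rfl⟩ := Finset.mem_image.1 hT'
    exact hi ((Finset.mem_powersetCard.1 hT).1 (Finset.mem_insert_self _ _))

theorem elemS_erase {ι : Type*} [DecidableEq ι] {S : Finset ι} {i : ι} (hi : i ∈ S) (j : ℕ)
    (x : ι → ℝ) :
    elemS S (j + 1) x = elemS (S.erase i) (j + 1) x + x i * elemS (S.erase i) j x := by
  rw [← elemS_insert (Finset.notMem_erase i S), Finset.insert_erase hi]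

theorem elemS_empty {ι : Type*} (j : ℕ) (x : ι → ℝ) : elemS ∅ (j + 1) x = 0 := by
  unfold elemS
  rw [Finset.powersetCard_eq_empty.2 (by simp)]
  simp

/-- Linearization of `elemS`, for two vectors. -/
theorem elemS_lin {ι : Type*} [DecidableEq ι] (j : ℕ) (x b : ι → ℝ) (S : Finset ι) (i : ι)
    (hi : i ∉ S) :
    ∑ l ∈ insert i S, b l * elemS ((insert i S).erase l) (j + 1) x =
      b i * elemS S (j + 1) x + ∑ l ∈ S, b l * elemS (S.erase l) (j + 1) x
        + x i * ∑ l ∈ S, b l * elemS (S.erase l) j x := by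
  rw [Finset.sum_insert hi, Finset.erase_insert hi, Finset.mul_sum, add_assoc,
    ← Finset.sum_add_distrib]
  congr 1
  refine Finset.sum_congr rfl fun l hl => ?_
  have hne : i ≠ l := fun h => hi (h ▸ hl)
  rw [Finset.erase_insert_of_ne hne, elemS_insert (fun h => hi (Finset.mem_of_mem_erase h))]
  ring

theorem elemS_euler {ι : Type*} [DecidableEq ι] (x : ι → ℝ) (S : Finset ι) : ∀ j : ℕ,
    ((j : ℝ) + 1) * elemS S (j + 1) x = ∑ i ∈ S, x i * elemS (S.erase i) j x := by
  induction S using Finset.induction_on with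
  | empty => intro j; simp [elemS_empty]
  | insert i S hi ih =>
    intro j
    rcases j with _ | j
    · have h0 := ih 0
      simp only [elemS_zero, mul_one] at h0 ⊢
      rw [elemS_insert hi, Finset.sum_insert hi, ← h0, elemS_zero]
      push_cast; ring
    · rw [elemS_lin _ _ _ _ _ hi, ← ih, ← ih, elemS_insert hi]
      push_cast; ring

theorem elemS_sum_erase {ι : Type*} [DecidableEq ι] (x : ι → ℝ) (S : Finset ι) (j : ℕ) :
    ∑ i ∈ S, elemS (S.erase i) j x = ((S.card : ℝ) - j) * elemS S j x := by
  rcases j with _ | j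
  · simp [elemS_zero]
  · have h : ∀ i ∈ S, elemS (S.erase i) (j + 1) x =
        elemS S (j + 1) x - x i * elemS (S.erase i) j x := fun i hi => by
      rw [elemS_erase hi]; ring
    rw [Finset.sum_congr rfl h, Finset.sum_sub_distrib, ← elemS_euler]
    simp; ring

theorem elemS_one {ι : Type*} [DecidableEq ι] (x : ι → ℝ) (S : Finset ι) :
    elemS S 1 x = ∑ i ∈ S, x i := by
  have := elemS_euler x S 0
  simpa [elemS_zero] using this

theorem elemS_two {ι : Type*} [DecidableEq ι] (x : ι → ℝ) (S : Finset ι) :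
    2 * elemS S 2 x = elemS S 1 x ^ 2 - ∑ i ∈ S, x i ^ 2 := by
  have h := elemS_euler x S 1
  have h2 : ∀ i ∈ S, x i * elemS (S.erase i) 1 x = x i * elemS S 1 x - x i ^ 2 := fun i hi => by
    rw [elemS_erase hi, elemS_zero]; ring
  rw [Finset.sum_congr rfl h2, Finset.sum_sub_distrib, ← Finset.sum_mul, ← elemS_one] at h
  push_cast at h
  linarith

theorem elemS_newton {ι : Type*} [DecidableEq ι] (x : ι → ℝ) (j : ℕ) : ∀ (S : Finset ι),
    elemS S j x * elemS S (j + 2) x ≤ elemS S (j + 1) x ^ 2 := by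
  induction j with
  | zero =>
    intro S
    have h := elemS_two x S
    have : 0 ≤ ∑ i ∈ S, x i ^ 2 := Finset.sum_nonneg fun i _ => sq_nonneg _
    rw [elemS_zero]
    simp only [zero_add]
    nlinarith [sq_nonneg (elemS S 1 x)]
  | succ j ih =>
    intro S
    have h1 := elemS_euler x S (j + 1)
    have h2 := elemS_euler x S (j + 2)
    have key : ((j : ℝ) + 2) * elemS S (j + 2) x * elemS S (j + 2) x
        - ((j : ℝ) + 3) * elemS S (j + 3) x * elemS S (j + 1) x =
        ∑ i ∈ S, x i ^ 2 * (elemS (S.erase i) (j + 1) x ^ 2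
          - elemS (S.erase i) j x * elemS (S.erase i) (j + 2) x) := by
      have e1 : ((j : ℝ) + 2) * elemS S (j + 2) x =
        ∑ i ∈ S, x i * elemS (S.erase i) (j + 1) x := by rw [← h1]; push_cast; ring
      have e2 : ((j : ℝ) + 3) * elemS S (j + 3) x =
        ∑ i ∈ S, x i * elemS (S.erase i) (j + 2) x := by rw [← h2]; push_cast; ring
      rw [e1, e2, Finset.sum_mul, Finset.sum_mul, ← Finset.sum_sub_distrib]
      refine Finset.sum_congr rfl fun i hi => ?_
      rw [elemS_erase hi (j + 1), elemS_erase hi j]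
      ring
    have hpos : 0 ≤ ∑ i ∈ S, x i ^ 2 * (elemS (S.erase i) (j + 1) x ^ 2
          - elemS (S.erase i) j x * elemS (S.erase i) (j + 2) x) :=
      Finset.sum_nonneg fun i _ => mul_nonneg (sq_nonneg _) (sub_nonneg.2 (ih _))
    rw [← key] at hpos
    have hj : (0 : ℝ) ≤ j := Nat.cast_nonneg j
    change elemS S (j + 1) x * elemS S (j + 3) x ≤ elemS S (j + 2) x ^ 2
    set p := elemS S (j + 1) x * elemS S (j + 3) x with hp
    have : ((j : ℝ) + 3) * p ≤ (j + 2) * elemS S (j + 2) x ^ 2 := by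
      rw [hp]; nlinarith
    by_contra hc
    push Not at hc
    nlinarith [sq_nonneg (elemS S (j + 2) x)]

theorem Gam.mono {ι : Type*} {S : Finset ι} {k l : ℕ} {x : ι → ℝ} (h : Gam S k x) (hl : l ≤ k) :
    Gam S l x := fun j hj => h j (hj.trans hl)

theorem Gam.erase {ι : Type*} [DecidableEq ι] {S : Finset ι} {k : ℕ} {x : ι → ℝ}
    (h : Gam S (k + 1) x) {i : ι} (hi : i ∈ S) : Gam (S.erase i) k x := by
  intro j
  induction j with
  | zero => intro _; rw [elemS_zero]; exact one_pos
  | succ j ih =>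
    intro hj
    have h0 := ih (by omega)
    by_contra hc
    push Not at hc
    have h1 := h (j + 1) (by omega)
    have h2 := h (j + 2) (by omega)
    rw [elemS_erase hi] at h1 h2
    have hn := elemS_newton x j (S.erase i)
    set a := elemS (S.erase i) j x
    set b := elemS (S.erase i) (j + 1) x
    set c := elemS (S.erase i) (j + 2) x
    change 0 < c + x i * b at h2
    have hx : 0 < x i := by
      by_contra hx
      push Not at hx
      nlinarith
    nlinarith [mul_pos h2 h0, mul_nonneg (neg_nonneg.2 hc) h1.le]

theorem titu_aux {x y q r s : ℝ} (h1 : 0 < x + q) (h2 : 0 < y + r) (hs : q + r ≤ s) :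
    x * q / (x + q) + y * r / (y + r) ≤ (x + y) * s / (x + y + s) := by
  have h3 : 0 < x + y + s := by linarith
  have h4 : 0 < x + y + (q + r) := by linarith
  have e1 : x * q / (x + q) + y * r / (y + r) ≤ (x + y) * (q + r) / (x + y + (q + r)) := by
    rw [div_add_div _ _ h1.ne' h2.ne', div_le_div_iff₀ (mul_pos h1 h2) h4]
    nlinarith [sq_nonneg (x * r - y * q)]
  refine e1.trans ?_
  rw [div_le_div_iff₀ h4 h3]
  nlinarith [mul_nonneg (sq_nonneg (x + y)) (sub_nonneg.2 hs)]

theorem quot_formula {ι : Type*} [DecidableEq ι] {S : Finset ι} {k : ℕ} {x : ι → ℝ}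
    (h : Gam S (k + 1) x) :
    ((k : ℝ) + 2) * (elemS S (k + 2) x / elemS S (k + 1) x) =
      ∑ i ∈ S, x i * (elemS (S.erase i) (k + 1) x / elemS (S.erase i) k x) /
        (x i + elemS (S.erase i) (k + 1) x / elemS (S.erase i) k x) := by
  have h1 := elemS_euler x S (k + 1)
  have e1 : ((k : ℝ) + 2) * elemS S (k + 2) x =
        ∑ i ∈ S, x i * elemS (S.erase i) (k + 1) x := by rw [← h1]; push_cast; ring
  rw [← mul_div_assoc, e1, Finset.sum_div]
  refine Finset.sum_congr rfl fun i hi => ?_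
  have hp := h.erase hi k le_rfl
  have hq := h (k + 1) le_rfl
  rw [elemS_erase hi] at hq ⊢
  have : x i + elemS (S.erase i) (k + 1) x / elemS (S.erase i) k x =
    (elemS (S.erase i) (k + 1) x + x i * elemS (S.erase i) k x) / elemS (S.erase i) k x := by
    field_simp; ring
  rw [this]
  field_simp

theorem quot_denom_pos {ι : Type*} [DecidableEq ι] {S : Finset ι} {k : ℕ} {x : ι → ℝ}
    (h : Gam S (k + 1) x) {i : ι} (hi : i ∈ S) :
    0 < x i + elemS (S.erase i) (k + 1) x / elemS (S.erase i) k x := by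
  have hp := h.erase hi k le_rfl
  have hq := h (k + 1) le_rfl
  rw [elemS_erase hi] at hq
  have : x i + elemS (S.erase i) (k + 1) x / elemS (S.erase i) k x =
    (elemS (S.erase i) (k + 1) x + x i * elemS (S.erase i) k x) / elemS (S.erase i) k x := by
    field_simp; ring
  rw [this]
  exact div_pos hq hp

theorem quot_superadd {ι : Type*} [DecidableEq ι] (k : ℕ) : ∀ (S : Finset ι) (a b : ι → ℝ),
    Gam S k a → Gam S k b → Gam S k (a + b) ∧
      elemS S (k + 1) a / elemS S k a + elemS S (k + 1) b / elemS S k b ≤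
        elemS S (k + 1) (a + b) / elemS S k (a + b) := by
  induction k with
  | zero =>
    intro S a b _ _
    refine ⟨fun j hj => ?_, ?_⟩
    · rw [Nat.le_zero.1 hj, elemS_zero]; exact one_pos
    · simp [elemS_zero, elemS_one, Finset.sum_add_distrib]
  | succ k ih =>
    intro S a b ha hb
    have hab : Gam S (k + 1) (a + b) := by
      obtain ⟨g, hq⟩ := ih S a b (ha.mono (Nat.le_succ k)) (hb.mono (Nat.le_succ k))
      intro j hj
      rcases Nat.lt_or_ge j (k + 1) with h | h
      · exact g j (by omega)
      · obtain rfl : j = k + 1 := by omega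
        have h1 := div_pos (ha (k + 1) le_rfl) (ha k (by omega))
        have h2 := div_pos (hb (k + 1) le_rfl) (hb k (by omega))
        have h3 := lt_of_lt_of_le (add_pos h1 h2) hq
        exact (div_pos_iff_of_pos_right (g k le_rfl)).1 h3
    refine ⟨hab, ?_⟩
    have hk : (0 : ℝ) < (k : ℝ) + 2 := by positivity
    refine le_of_mul_le_mul_left ?_ hk
    change ((k : ℝ) + 2) * (elemS S (k + 2) a / elemS S (k + 1) a +
      elemS S (k + 2) b / elemS S (k + 1) b) ≤
      ((k : ℝ) + 2) * (elemS S (k + 2) (a + b) / elemS S (k + 1) (a + b))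
    rw [mul_add, quot_formula ha, quot_formula hb, quot_formula hab, ← Finset.sum_add_distrib]
    refine Finset.sum_le_sum fun i hi => ?_
    exact titu_aux (quot_denom_pos ha hi) (quot_denom_pos hb hi)
      (ih (S.erase i) a b (ha.erase hi) (hb.erase hi)).2

theorem elemS_smul {ι : Type*} (S : Finset ι) (j : ℕ) (t : ℝ) (x : ι → ℝ) :
    elemS S j (t • x) = t ^ j * elemS S j x := by
  unfold elemS
  rw [Finset.mul_sum]
  refine Finset.sum_congr rfl fun T hT => ?_
  simp [Finset.prod_mul_distrib, (Finset.mem_powersetCard.1 hT).2]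

theorem elemS_hasDerivAt {ι : Type*} [DecidableEq ι] (a b : ι → ℝ) (S : Finset ι) : ∀ j : ℕ,
    HasDerivAt (fun t : ℝ => elemS S (j + 1) (a + t • b))
      (∑ i ∈ S, b i * elemS (S.erase i) j a) 0 := by
  induction S using Finset.induction_on with
  | empty => intro j; simpa [elemS_empty] using hasDerivAt_const (0 : ℝ) (0 : ℝ)
  | insert i S hi ih =>
    intro j
    have hlin : HasDerivAt (fun t : ℝ => a i + t * b i) (b i) 0 := by
      simpa using ((hasDerivAt_id (0 : ℝ)).mul_const (b i)).const_add (a i)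
    have hfun : (fun t : ℝ => elemS (insert i S) (j + 1) (a + t • b)) =
      fun t => elemS S (j + 1) (a + t • b) + (a i + t * b i) * elemS S j (a + t • b) := by
      funext t
      rw [elemS_insert hi]; simp
    rw [hfun]
    rcases j with _ | j
    · have := (ih 0).add hlin
      simp only [elemS_zero, mul_one] at this ⊢
      rw [Finset.sum_insert hi, add_comm (b i)]
      exact this
    · rw [elemS_lin _ _ _ _ _ hi]
      refine ((ih (j + 1)).add (hlin.mul (ih j))).congr_deriv ?_
      simp only [zero_smul, add_zero, zero_mul]
      ring

theorem elemS_eq_prod {ι : Type*} {S : Finset ι} {k : ℕ} {x : ι → ℝ} (h : Gam S k x) :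
    ∏ j ∈ Finset.range k, (elemS S (j + 1) x / elemS S j x) = elemS S k x := by
  induction k with
  | zero => simp [elemS_zero]
  | succ k ih =>
    rw [Finset.prod_range_succ, ih (h.mono (Nat.le_succ k))]
    have := (h k (Nat.le_succ k)).ne'
    field_simp

theorem amgm_aux (k : ℕ) (hk : 1 ≤ k) (p r : ℕ → ℝ) (hp : ∀ j < k, 0 < p j) (hr : ∀ j < k, 0 < r j)
    (α β : ℝ) (hα : 0 < α) (hβ : 0 < β) (h1 : ∏ j ∈ Finset.range k, p j = α ^ k)
    (h2 : ∏ j ∈ Finset.range k, r j = β ^ k) :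
    k * α ^ (k - 1) * β ≤
      ∑ j ∈ Finset.range k, (∏ i ∈ (Finset.range k).erase j, p i) * r j := by
  have hk' : (0 : ℝ) < k := by exact_mod_cast hk
  have e : ∀ j ∈ Finset.range k, (∏ i ∈ (Finset.range k).erase j, p i) * r j =
      α ^ k * (r j / p j) := fun j hj => by
    rw [← h1, ← Finset.mul_prod_erase _ _ hj]
    have := (hp j (Finset.mem_range.1 hj)).ne'
    field_simp
  rw [Finset.sum_congr rfl e, ← Finset.mul_sum]
  have am := Real.geom_mean_le_arith_mean_weighted (Finset.range k) (fun _ => (1 : ℝ) / k)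
    (fun j => r j / p j) (fun _ _ => by positivity) (by simp; field_simp)
    (fun j hj => (div_pos (hr j (Finset.mem_range.1 hj)) (hp j (Finset.mem_range.1 hj))).le)
  rw [Real.finsetProd_rpow _ _
    (fun j hj => (div_pos (hr j (Finset.mem_range.1 hj)) (hp j (Finset.mem_range.1 hj))).le),
    Finset.prod_div_distrib, h1, h2, ← div_pow, one_div,
    Real.pow_rpow_inv_natCast (by positivity) (by omega), ← Finset.mul_sum] at am
  have : k * (β / α) ≤ ∑ j ∈ Finset.range k, r j / p j := by
    have := mul_le_mul_of_nonneg_left am hk'.le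
    rwa [← mul_assoc, mul_inv_cancel₀ hk'.ne', one_mul] at this
  calc (k : ℝ) * α ^ (k - 1) * β = α ^ k * (k * (β / α)) := by
        obtain ⟨m, rfl⟩ : ∃ m, k = m + 1 := ⟨k - 1, by omega⟩
        simp only [Nat.add_sub_cancel, pow_succ]
        field_simp
    _ ≤ _ := mul_le_mul_of_nonneg_left this (by positivity)

theorem garding_vec {ι : Type*} [DecidableEq ι] (S : Finset ι) (k : ℕ) (a b : ι → ℝ)
    (ha : Gam S (k + 1) a) (hb : Gam S (k + 1) b) (α β : ℝ) (hα : 0 < α) (hβ : 0 < β)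
    (h1 : elemS S (k + 1) a = α ^ (k + 1)) (h2 : elemS S (k + 1) b = β ^ (k + 1)) :
    ((k : ℝ) + 1) * α ^ k * β ≤ ∑ i ∈ S, b i * elemS (S.erase i) k a := by
  set p : ℕ → ℝ := fun j => elemS S (j + 1) a / elemS S j a
  set r : ℕ → ℝ := fun j => elemS S (j + 1) b / elemS S j b
  have hp : ∀ j < k + 1, 0 < p j := fun j hj => div_pos (ha _ (by omega)) (ha _ (by omega))
  have hr : ∀ j < k + 1, 0 < r j := fun j hj => div_pos (hb _ (by omega)) (hb _ (by omega))
  have am := amgm_aux (k + 1) (by omega) p r hp hr α β hα hβ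
    (by rw [elemS_eq_prod ha, h1]) (by rw [elemS_eq_prod hb, h2])
  have am' : ((k : ℝ) + 1) * α ^ k * β ≤
      ∑ j ∈ Finset.range (k + 1), (∏ i ∈ (Finset.range (k + 1)).erase j, p i) * r j := by
    simpa using am
  refine am'.trans ?_
  have d1 := elemS_hasDerivAt a b S k
  have d2 : HasDerivAt (fun t : ℝ => ∏ j ∈ Finset.range (k + 1), (p j + t * r j))
      (∑ j ∈ Finset.range (k + 1), (∏ i ∈ (Finset.range (k + 1)).erase j, p i) * r j) 0 := by
    have hl : ∀ j ∈ Finset.range (k + 1), HasDerivAt (fun t : ℝ => p j + t * r j) (r j) 0 :=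
      fun j _ => by
        simpa using ((hasDerivAt_id (0 : ℝ)).mul_const (r j)).const_add (p j)
    have := HasDerivAt.fun_finsetProd hl
    refine this.congr_deriv ?_
    simp
  have d := d1.sub d2
  have hmin : ∀ t : ℝ, 0 < t → 0 ≤ elemS S (k + 1) (a + t • b)
      - ∏ j ∈ Finset.range (k + 1), (p j + t * r j) := by
    intro t ht
    have hb' : Gam S (k + 1) (t • b) := fun j hj => by
      rw [elemS_smul]; exact mul_pos (pow_pos ht _) (hb j hj)
    have hab := (quot_superadd (k + 1) S a (t • b) ha hb').1
    rw [← elemS_eq_prod hab, sub_nonneg]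
    refine Finset.prod_le_prod (fun j hj => ?_) (fun j hj => ?_)
    · have := hp j (Finset.mem_range.1 hj)
      have := hr j (Finset.mem_range.1 hj)
      positivity
    · have hj' := Finset.mem_range.1 hj
      have := (quot_superadd j S a (t • b) (ha.mono (by omega)) (hb'.mono (by omega))).2
      refine le_trans (le_of_eq ?_) this
      simp only [p, r, elemS_smul, pow_succ]
      have := (hb j (by omega)).ne'
      field_simp
  have h0 : elemS S (k + 1) (a + (0 : ℝ) • b) - ∏ j ∈ Finset.range (k + 1), (p j + 0 * r j) = 0 := by
    simp only [zero_smul, add_zero, zero_mul]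
    rw [elemS_eq_prod ha, sub_self]
  rw [← sub_nonneg]
  have ht := hasDerivWithinAt_iff_tendsto_slope.1 (d.hasDerivWithinAt (s := Ioi 0))
  have hs : (Ioi (0 : ℝ)) \ {0} = Ioi 0 := by simp
  rw [hs] at ht
  refine ge_of_tendsto ht ?_
  filter_upwards [self_mem_nhdsWithin] with t ht
  rw [slope_def_field]
  simp only [Pi.sub_apply]
  rw [h0, sub_zero, sub_zero]
  exact div_nonneg (hmin t ht) (le_of_lt ht)

theorem elemS_chain {ι : Type*} [DecidableEq ι] (S : Finset ι) (a : ι → ℝ) (k : ℕ)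
    (ha : Gam S (k + 2) a) :
    elemS S 1 a * elemS S (k + 2) a ^ k ≤ elemS S (k + 1) a ^ (k + 1) := by
  induction k with
  | zero => simp
  | succ k ih =>
    have h1 := ih (ha.mono (by omega))
    have hn := elemS_newton a (k + 1) S
    have p0 := ha 1 (by omega)
    have p1 := ha (k + 1) (by omega)
    have p2 := ha (k + 2) (by omega)
    have p3 := ha (k + 3) (by omega)
    change elemS S 1 a * elemS S (k + 3) a ^ (k + 1) ≤ elemS S (k + 2) a ^ (k + 2)
    change elemS S (k + 1) a * elemS S (k + 3) a ≤ elemS S (k + 2) a ^ 2 at hn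
    set x := elemS S 1 a
    set s := elemS S (k + 1) a
    set t := elemS S (k + 2) a
    set w := elemS S (k + 3) a
    have h2 : (s * w) ^ (k + 1) ≤ (t ^ 2) ^ (k + 1) := pow_le_pow_left₀ (by positivity) hn _
    refine le_of_mul_le_mul_left ?_ (show 0 < t ^ k * s ^ (k + 1) by positivity)
    calc t ^ k * s ^ (k + 1) * (x * w ^ (k + 1)) = (x * t ^ k) * (s * w) ^ (k + 1) := by ring
      _ ≤ s ^ (k + 1) * (t ^ 2) ^ (k + 1) := by gcongr
      _ = t ^ k * s ^ (k + 1) * t ^ (k + 2) := by ring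


theorem elemS_eq_esymm {ι : Type*} (S : Finset ι) (j : ℕ) (x : ι → ℝ) :
    elemS S j x = (S.val.map x).esymm j := by
  rw [Finset.esymm_map_val]; rfl

theorem elemS_perm {ι : Type*} [Fintype ι] (j : ℕ) (x : ι → ℝ) (s : Equiv.Perm ι) :
    elemS Finset.univ j (fun i => x (s i)) = elemS Finset.univ j x := by
  rw [elemS_eq_esymm, elemS_eq_esymm]
  congr 1
  have := Multiset.map_univ_val_equiv s
  conv_rhs => rw [← this]
  rw [Multiset.map_map]
  rfl

theorem esymmMat_eq {n : ℕ} {A : Matrix (Fin n) (Fin n) ℝ} (hA : A.IsHermitian) {j : ℕ}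
    (hj : j ≤ n) : esymmMat j A = elemS Finset.univ j hA.eigenvalues := by
  unfold esymmMat
  have h := hA.charpoly_eq
  have h2 : A.charpoly = ((Finset.univ.val.map hA.eigenvalues).map
      (fun t => Polynomial.X - Polynomial.C t)).prod := by
    rw [h, Multiset.map_map]; rfl
  rw [h2, Multiset.prod_X_sub_C_coeff _ (by simp)]
  simp only [Multiset.card_map, Finset.card_val, Finset.card_univ, Fintype.card_fin]
  rw [Nat.sub_sub_self hj, ← elemS_eq_esymm, ← mul_assoc, ← pow_add, ← two_mul]
  simp

theorem gammaPlus_gam {n k : ℕ} {A : Matrix (Fin n) (Fin n) ℝ} (hA : A.IsHermitian)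
    (hk : k ≤ n) (h : GammaPlus k A) : Gam Finset.univ k hA.eigenvalues := by
  intro j hj
  rcases Nat.eq_zero_or_pos j with rfl | h0
  · rw [elemS_zero]; exact one_pos
  · rw [← esymmMat_eq hA (hj.trans hk)]; exact h j h0 hj

theorem herm_diag {n : ℕ} {B : Matrix (Fin n) (Fin n) ℝ} (hB : B.IsHermitian) :
    ∃ V : Matrix (Fin n) (Fin n) ℝ, Vᵀ * V = 1 ∧ V * Vᵀ = 1 ∧
      B = V * diagonal hB.eigenvalues * Vᵀ := by
  refine ⟨hB.eigenvectorUnitary, ?_, ?_, ?_⟩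
  · have := Unitary.coe_star_mul_self hB.eigenvectorUnitary
    simpa [star_eq_conjTranspose] using this
  · have := Unitary.coe_mul_star_self hB.eigenvectorUnitary
    simpa [star_eq_conjTranspose] using this
  · have := hB.spectral_theorem
    rw [Unitary.conjStarAlgAut_apply] at this
    simpa [star_eq_conjTranspose, Function.comp_def] using this

theorem garding_ds {n k : ℕ} (a b : Fin n → ℝ) (ha : Gam Finset.univ (k + 1) a)
    (hb : Gam Finset.univ (k + 1) b) (α β : ℝ) (hα : 0 < α) (hβ : 0 < β)
    (h1 : elemS Finset.univ (k + 1) a = α ^ (k + 1))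
    (h2 : elemS Finset.univ (k + 1) b = β ^ (k + 1))
    (W : Matrix (Fin n) (Fin n) ℝ) (hW : Wᵀ * W = 1) (hW' : W * Wᵀ = 1) :
    ((k : ℝ) + 1) * α ^ k * β ≤
      ∑ i, elemS (Finset.univ.erase i) k a * ∑ j, W i j ^ 2 * b j := by
  have hds : (Matrix.of fun i j => W i j ^ 2) ∈ doublyStochastic ℝ (Fin n) := by
    rw [mem_doublyStochastic_iff_sum]
    refine ⟨fun i j => sq_nonneg _, fun i => ?_, fun j => ?_⟩
    · have := congrFun (congrFun hW' i) i
      simpa [Matrix.mul_apply, sq] using this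
    · have := congrFun (congrFun hW j) j
      simpa [Matrix.mul_apply, sq] using this
  obtain ⟨w, hw0, hw1, hw⟩ := exists_eq_sum_perm_of_mem_doublyStochastic hds
  have hWb : ∀ i, ∑ j, W i j ^ 2 * b j = ∑ s : Equiv.Perm (Fin n), w s * b (s i) := by
    intro i
    have : ∀ j, W i j ^ 2 = ∑ s : Equiv.Perm (Fin n), w s * (s.permMatrix ℝ) i j := fun j => by
      have := congrFun (congrFun hw i) j
      simp only [Matrix.sum_apply, Matrix.smul_apply, smul_eq_mul, Matrix.of_apply] at this
      exact this.symm
    simp only [this, Finset.sum_mul]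
    rw [Finset.sum_comm]
    refine Finset.sum_congr rfl fun s _ => ?_
    simp [PEquiv.toMatrix_apply, Equiv.toPEquiv_apply]
  simp only [hWb, Finset.mul_sum]
  rw [Finset.sum_comm]
  calc ((k : ℝ) + 1) * α ^ k * β = ∑ s : Equiv.Perm (Fin n), w s * (((k : ℝ) + 1) * α ^ k * β) := by
        rw [← Finset.sum_mul, hw1, one_mul]
    _ ≤ _ := by
        refine Finset.sum_le_sum fun s _ => ?_
        have hg := garding_vec Finset.univ k a (fun i => b (s i)) ha
          (fun j hj => by rw [elemS_perm]; exact hb j hj) α β hα hβ h1 (by rw [elemS_perm, h2])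
        refine (mul_le_mul_of_nonneg_left hg (hw0 s)).trans (le_of_eq ?_)
        rw [Finset.mul_sum]
        exact Finset.sum_congr rfl fun i _ => by ring

theorem conj_diag_apply {n : ℕ} (W : Matrix (Fin n) (Fin n) ℝ) (b : Fin n → ℝ) (i : Fin n) :
    (W * diagonal b * Wᵀ) i i = ∑ j, W i j ^ 2 * b j := by
  rw [Matrix.mul_apply]
  refine Finset.sum_congr rfl fun j _ => ?_
  rw [Matrix.mul_diagonal, Matrix.transpose_apply]; ring

theorem linear_functional {n k : ℕ} (hkn : k + 2 ≤ n) {A : Matrix (Fin n) (Fin n) ℝ}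
    (hA : A.IsHermitian) (hG : GammaPlus (k + 2) A) (α : ℝ) (hα : 0 < α)
    (hAα : esymmMat (k + 2) A = α ^ (k + 2)) :
    ∃ (w : Fin n → ℝ) (ξ : Fin n → Fin n → ℝ), (∀ i, 0 ≤ w i) ∧ (∀ i, ∑ j, ξ i j ^ 2 = 1) ∧
      (∀ B : Matrix (Fin n) (Fin n) ℝ, B.IsHermitian → GammaPlus (k + 2) B → ∀ β : ℝ, 0 < β →
        esymmMat (k + 2) B = β ^ (k + 2) →
        ((k : ℝ) + 2) * α ^ (k + 1) * β ≤ ∑ i, w i * (ξ i ⬝ᵥ B *ᵥ ξ i)) ∧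
      ∑ i, w i * (ξ i ⬝ᵥ A *ᵥ ξ i) = ((k : ℝ) + 2) * α ^ (k + 2) ∧
      A.trace * (α ^ (k + 2)) ^ k ≤ (∑ i, w i) ^ (k + 1) := by
  obtain ⟨U, hU, hU', hAU⟩ := herm_diag hA
  have ga := gammaPlus_gam hA hkn hG
  have hsa : elemS Finset.univ (k + 2) hA.eigenvalues = α ^ (k + 2) := by
    rw [← esymmMat_eq hA hkn, hAα]
  have hform : ∀ (B : Matrix (Fin n) (Fin n) ℝ) (i : Fin n),
      (fun j => U j i) ⬝ᵥ B *ᵥ (fun j => U j i) = (Uᵀ * B * U) i i := by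
    intro B i
    rw [Matrix.mul_assoc, Matrix.mul_apply]
    rfl
  refine ⟨fun i => elemS (Finset.univ.erase i) (k + 1) hA.eigenvalues, fun i j => U j i,
    fun i => (ga.erase (Finset.mem_univ i) (k + 1) le_rfl).le, fun i => ?_, ?_, ?_, ?_⟩
  · have := congrFun (congrFun hU i) i
    simpa [Matrix.mul_apply, sq] using this
  · intro B hB hGB β hβ hBβ
    obtain ⟨V, hV, hV', hBV⟩ := herm_diag hB
    have hW : (Uᵀ * V)ᵀ * (Uᵀ * V) = 1 := by
      rw [Matrix.transpose_mul, Matrix.transpose_transpose, Matrix.mul_assoc,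
        ← Matrix.mul_assoc U, hU', Matrix.one_mul, hV]
    have hW' : (Uᵀ * V) * (Uᵀ * V)ᵀ = 1 := by
      rw [Matrix.transpose_mul, Matrix.transpose_transpose, Matrix.mul_assoc,
        ← Matrix.mul_assoc V, hV', Matrix.one_mul, hU]
    have hg := garding_ds (k := k + 1) hA.eigenvalues hB.eigenvalues ga
      (gammaPlus_gam hB hkn hGB) α β hα hβ hsa (by rw [← esymmMat_eq hB hkn, hBβ]) _ hW hW'
    push_cast at hg
    have e : ((k : ℝ) + 2) = k + 1 + 1 := by ring
    rw [e]
    refine hg.trans (le_of_eq (Finset.sum_congr rfl fun i _ => ?_))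
    rw [hform, ← conj_diag_apply]
    congr 2
    conv_rhs => rw [hBV]
    rw [Matrix.transpose_mul, Matrix.transpose_transpose]
    simp only [Matrix.mul_assoc]
  · have : ∀ i, (Uᵀ * A * U) i i = hA.eigenvalues i := fun i => by
      have h : Uᵀ * A * U = diagonal hA.eigenvalues := by
        conv_lhs => rw [hAU]
        calc Uᵀ * (U * diagonal hA.eigenvalues * Uᵀ) * U
            = (Uᵀ * U) * diagonal hA.eigenvalues * (Uᵀ * U) := by simp only [Matrix.mul_assoc]
          _ = _ := by rw [hU]; simp
      rw [h, Matrix.diagonal_apply_eq]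
    simp only [hform, this]
    have he := elemS_euler hA.eigenvalues Finset.univ (k + 1)
    rw [hsa] at he
    push_cast at he
    rw [show ((k : ℝ) + 2) = k + 1 + 1 by ring, he]
    exact Finset.sum_congr rfl fun i _ => mul_comm _ _
  · have h1 := elemS_chain Finset.univ hA.eigenvalues k ga
    rw [hsa] at h1
    have htr : A.trace = elemS Finset.univ 1 hA.eigenvalues := by
      rw [elemS_one]; simpa using hA.trace_eq_sum_eigenvalues
    rw [htr]
    refine h1.trans ?_
    have hp := (ga (k + 1) (by omega)).le
    refine pow_le_pow_left₀ hp ?_ _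
    rw [elemS_sum_erase]
    have hn : (1 : ℝ) ≤ (Finset.univ : Finset (Fin n)).card - ((k + 1 : ℕ) : ℝ) := by
      simp only [Finset.card_univ, Fintype.card_fin]
      have : ((k + 2 : ℕ) : ℝ) ≤ n := by exact_mod_cast hkn
      push_cast at this ⊢
      linarith
    nlinarith

theorem frob_le {n k : ℕ} (hkn : k + 2 ≤ n) {A : Matrix (Fin n) (Fin n) ℝ}
    (hA : A.IsHermitian) (hG : GammaPlus (k + 2) A) :
    0 < A.trace ∧ ∀ i j, |A i j| ≤ A.trace := by
  have ga := gammaPlus_gam hA hkn hG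
  have htr : A.trace = elemS Finset.univ 1 hA.eigenvalues := by
    rw [elemS_one]; simpa using hA.trace_eq_sum_eigenvalues
  have h1 := ga 1 (by omega)
  refine ⟨htr ▸ h1, fun i j => ?_⟩
  obtain ⟨U, hU, hU', hAU⟩ := herm_diag hA
  have h2 := elemS_two hA.eigenvalues Finset.univ
  have h3 := ga 2 (by omega)
  have hsq : (A * A).trace = ∑ i, hA.eigenvalues i ^ 2 := by
    have : A * A = U * (diagonal hA.eigenvalues * diagonal hA.eigenvalues) * Uᵀ := by
      conv_lhs => rw [hAU]
      calc U * diagonal hA.eigenvalues * Uᵀ * (U * diagonal hA.eigenvalues * Uᵀ)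
          = U * diagonal hA.eigenvalues * (Uᵀ * U) * diagonal hA.eigenvalues * Uᵀ := by
            simp only [Matrix.mul_assoc]
        _ = _ := by rw [hU]; simp only [Matrix.mul_assoc, Matrix.mul_one]
    rw [this, Matrix.trace_mul_comm, ← Matrix.mul_assoc, hU, Matrix.one_mul,
      Matrix.diagonal_mul_diagonal, Matrix.trace_diagonal]
    exact Finset.sum_congr rfl fun i _ => (sq _).symm
  have hsym : ∀ i j, A i j = A j i := fun i j => by
    have := congrFun (congrFun hA j) i
    simpa using this
  have hle : A i j ^ 2 ≤ (A * A).trace := by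
    rw [Matrix.trace]
    refine le_trans ?_ (Finset.single_le_sum (f := fun i => (A * A).diag i) (fun l _ => ?_)
      (Finset.mem_univ i))
    · simp only [Matrix.diag_apply, Matrix.mul_apply]
      refine le_trans (le_of_eq ?_) (Finset.single_le_sum (f := fun l => A i l * A l i)
        (fun l _ => ?_) (Finset.mem_univ j))
      · simp only [hsym j i, sq]
      · simp only [hsym l i]; exact mul_self_nonneg _
    · simp only [Matrix.diag_apply, Matrix.mul_apply]
      exact Finset.sum_nonneg fun m _ => by rw [hsym m l]; exact mul_self_nonneg _
  refine abs_le_of_sq_le_sq ?_ (htr ▸ h1.le)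
  rw [htr]
  linarith


theorem lintegral_homothety {n : ℕ} (x : Fin n → ℝ) {t : ℝ} (ht : 0 < t)
    {H : (Fin n → ℝ) → ENNReal} (hH : Measurable H) :
    ∫⁻ y, H (x + t • (y - x)) = ENNReal.ofReal ((t ^ n)⁻¹) * ∫⁻ z, H z := by
  have e : ∀ y : Fin n → ℝ, x + t • (y - x) = t • y + (x - t • x) := fun y => by
    rw [smul_sub]; abel
  simp only [e]
  have h1 : Measurable fun z : Fin n → ℝ => H (z + (x - t • x)) := hH.comp (measurable_add_const _)
  have h2 := lintegral_map (μ := (volume : Measure (Fin n → ℝ))) h1 (measurable_const_smul t)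
  rw [Measure.map_addHaar_smul _ ht.ne', lintegral_smul_measure,
    lintegral_add_right_eq_self H] at h2
  rw [← h2]
  simp [abs_of_pos ht]

theorem young_aux {G s p : ℝ} (hG : 0 ≤ G) (hs : 0 < s) (hp : 1 ≤ p) :
    G ≤ s + s ^ (1 - p) * G ^ p := by
  rcases le_or_gt G s with h | h
  · have : 0 ≤ s ^ (1 - p) * G ^ p := by positivity
    linarith
  · have hG' : 0 < G := hs.trans h
    have h1 : s ^ (1 - p) * G ^ p = G * (G / s) ^ (p - 1) := by
      rw [Real.div_rpow hG hs.le, show 1 - p = -(p - 1) by ring, Real.rpow_neg hs.le,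
        show G ^ p = G ^ (p - 1) * G by
          rw [← Real.rpow_add_one hG'.ne']; ring_nf]
      field_simp
    have h2 : 1 ≤ (G / s) ^ (p - 1) :=
      Real.one_le_rpow ((one_le_div hs).2 h.le) (by linarith)
    rw [h1]
    nlinarith

theorem morrey_sup {n : ℕ} (hn : 0 < n) (p : ℝ) (hp : (n : ℝ) < p) (x₀ : Fin n → ℝ) (r : ℝ)
    (hr : 0 < r) (N : ENNReal) (hN : N ≠ ⊤) :
    ∃ C : ℝ, ∀ g : (Fin n → ℝ) → ℝ, (∀ z ∈ ball x₀ r, DifferentiableAt ℝ g z) →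
      ContinuousOn (fderiv ℝ g) (ball x₀ r) →
      ∫⁻ z in ball x₀ r, ENNReal.ofReal (|g z| ^ p) ≤ N →
      ∫⁻ z in ball x₀ r, ENNReal.ofReal (‖fderiv ℝ g z‖ ^ p) ≤ N →
      ∀ x ∈ ball x₀ r, |g x| ≤ C := by
  set B := ball x₀ r with hB
  have hp1 : 1 ≤ p := by
    have : (1 : ℝ) ≤ n := by exact_mod_cast hn
    linarith
  have hp0 : 0 < p := by linarith
  set V := volume B with hV
  have hV0 : V ≠ 0 := (measure_ball_pos volume x₀ hr).ne'
  have hVt : V ≠ ⊤ := measure_ball_lt_top.ne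
  set J := ∫⁻ t in Ioc (0 : ℝ) 1, ENNReal.ofReal (t ^ (-(n : ℝ) / p)) with hJ
  have hJt : J ≠ ⊤ := by
    have hlt : -1 < -(n : ℝ) / p := by
      rw [lt_div_iff₀ hp0]; linarith
    have := (intervalIntegral.intervalIntegrable_rpow' (a := 0) (b := 1) hlt)
    rw [intervalIntegrable_iff_integrableOn_Ioc_of_le zero_le_one] at this
    exact this.lintegral_lt_top.ne
  set K : ENNReal := (V + N) + ENNReal.ofReal (2 * r) * ((V + N) * J) with hK
  have hKt : K ≠ ⊤ := by
    rw [hK]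
    refine ENNReal.add_ne_top.2 ⟨ENNReal.add_ne_top.2 ⟨hVt, hN⟩, ?_⟩
    exact ENNReal.mul_ne_top ENNReal.ofReal_ne_top
      (ENNReal.mul_ne_top (ENNReal.add_ne_top.2 ⟨hVt, hN⟩) hJt)
  refine ⟨(K / V).toReal, fun g hg hgc h1 h2 x hx => ?_⟩
  have hconv : Convex ℝ B := convex_ball x₀ r
  have hseg : ∀ y ∈ B, ∀ t ∈ Icc (0 : ℝ) 1, x + t • (y - x) ∈ B := fun y hy t ht => by
    exact hconv.add_smul_sub_mem hx hy ht
  set G : (Fin n → ℝ) → ℝ := fun z => ‖fderiv ℝ g z‖ with hG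
  have hGm : Measurable G := (measurable_fderiv ℝ g).norm
  have hpt : ∀ y ∈ B, ENNReal.ofReal |g x| ≤ ENNReal.ofReal |g y| +
      ENNReal.ofReal (2 * r) * ∫⁻ t in Ioc (0 : ℝ) 1, ENNReal.ofReal (G (x + t • (y - x))) := by
    intro y hy
    have hd : ∀ t ∈ uIcc (0 : ℝ) 1, HasDerivAt (fun t : ℝ => g (x + t • (y - x)))
        (fderiv ℝ g (x + t • (y - x)) (y - x)) t := fun t ht => by
      rw [uIcc_of_le zero_le_one] at ht
      have h := (hg _ (hseg y hy t ht)).hasFDerivAt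
      have hl : HasDerivAt (fun t : ℝ => x + t • (y - x)) (y - x) t := by
        simpa using ((hasDerivAt_id t).smul_const (y - x)).const_add x
      exact h.comp_hasDerivAt t hl
    have hc : ContinuousOn (fun t : ℝ => fderiv ℝ g (x + t • (y - x)) (y - x)) (uIcc 0 1) := by
      rw [uIcc_of_le zero_le_one]
      refine ContinuousOn.clm_apply (hgc.comp (by fun_prop) fun t ht => hseg y hy t ht)
        continuousOn_const
    have hftc := intervalIntegral.integral_eq_sub_of_hasDerivAt hd hc.intervalIntegrable
    simp only [one_smul, zero_smul, add_zero, add_sub_cancel] at hftc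
    have hle : ENNReal.ofReal |g y - g x| ≤
        ENNReal.ofReal (2 * r) * ∫⁻ t in Ioc (0 : ℝ) 1, ENNReal.ofReal (G (x + t • (y - x))) := by
      rw [← hftc, intervalIntegral.integral_of_le zero_le_one, ← Real.norm_eq_abs,
        ofReal_norm]
      refine (enorm_integral_le_lintegral_enorm _).trans ?_
      rw [← lintegral_const_mul']
      · refine lintegral_mono fun t => ?_
        rw [← ofReal_norm, ← ENNReal.ofReal_mul (by positivity)]
        refine ENNReal.ofReal_le_ofReal ?_
        refine (ContinuousLinearMap.le_opNorm _ _).trans ?_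
        rw [mul_comm]
        refine mul_le_mul_of_nonneg_right ?_ (norm_nonneg _)
        rw [← dist_eq_norm]
        have d1 := mem_ball.1 hx
        have d2 := mem_ball.1 hy
        have := dist_triangle_right y x x₀
        linarith
      · exact ENNReal.ofReal_ne_top
    calc ENNReal.ofReal |g x| ≤ ENNReal.ofReal (|g y| + |g y - g x|) := by
          refine ENNReal.ofReal_le_ofReal ?_
          have := abs_sub_abs_le_abs_sub (g x) (g y)
          rw [abs_sub_comm] at this
          linarith
      _ ≤ _ := by
          rw [ENNReal.ofReal_add (abs_nonneg _) (abs_nonneg _)]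
          gcongr
  have hGm2 : Measurable (Function.uncurry fun (y : Fin n → ℝ) (t : ℝ) =>
      ENNReal.ofReal (G (x + t • (y - x)))) := by
    refine ENNReal.measurable_ofReal.comp (hGm.comp ?_)
    fun_prop
  have hin : ∀ t ∈ Ioc (0 : ℝ) 1, ∫⁻ y in B, ENNReal.ofReal (G (x + t • (y - x))) ≤
      (V + N) * ENNReal.ofReal (t ^ (-(n : ℝ) / p)) := by
    intro t ht
    set s := t ^ (-(n : ℝ) / p) with hs
    have hs0 : 0 < s := Real.rpow_pos_of_pos ht.1 _
    have hst : s ^ (1 - p) * (t ^ n)⁻¹ = s := by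
      rw [hs, ← Real.rpow_mul ht.1.le, ← Real.rpow_natCast, ← Real.rpow_neg ht.1.le,
        ← Real.rpow_add ht.1]
      congr 1
      field_simp
      ring
    set Hf : (Fin n → ℝ) → ENNReal := fun z => B.indicator (fun z => ENNReal.ofReal (G z ^ p)) z
    have hHf : Measurable Hf := by
      refine Measurable.indicator ?_ measurableSet_ball
      exact ENNReal.measurable_ofReal.comp (hGm.pow_const p)
    calc ∫⁻ y in B, ENNReal.ofReal (G (x + t • (y - x)))
        ≤ ∫⁻ y in B, (ENNReal.ofReal s + ENNReal.ofReal (s ^ (1 - p)) * Hf (x + t • (y - x))) := by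
          refine setLIntegral_mono' measurableSet_ball fun y hy => ?_
          have hm : x + t • (y - x) ∈ B := hseg y hy t ⟨ht.1.le, ht.2⟩
          have : Hf (x + t • (y - x)) = ENNReal.ofReal (G (x + t • (y - x)) ^ p) :=
            indicator_of_mem hm _
          rw [this, ← ENNReal.ofReal_mul (by positivity),
            ← ENNReal.ofReal_add (by positivity) (by positivity)]
          exact ENNReal.ofReal_le_ofReal (young_aux (norm_nonneg _) hs0 hp1)
      _ = ENNReal.ofReal s * V + ENNReal.ofReal (s ^ (1 - p)) * ∫⁻ y in B, Hf (x + t • (y - x)) := by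
          rw [lintegral_add_left measurable_const, setLIntegral_const,
            lintegral_const_mul' _ _ ENNReal.ofReal_ne_top]
      _ ≤ ENNReal.ofReal s * V + ENNReal.ofReal (s ^ (1 - p)) * ∫⁻ y, Hf (x + t • (y - x)) := by
          gcongr
          exact Measure.restrict_le_self
      _ = ENNReal.ofReal s * V + ENNReal.ofReal (s ^ (1 - p)) *
            (ENNReal.ofReal ((t ^ n)⁻¹) * ∫⁻ z in B, ENNReal.ofReal (G z ^ p)) := by
          rw [lintegral_homothety x ht.1 hHf]
          congr 3
          exact lintegral_indicator measurableSet_ball _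
      _ ≤ ENNReal.ofReal s * V + ENNReal.ofReal (s ^ (1 - p)) *
            (ENNReal.ofReal ((t ^ n)⁻¹) * N) := by
          gcongr
      _ = (V + N) * ENNReal.ofReal s := by
          rw [← mul_assoc, ← ENNReal.ofReal_mul (by positivity), hst]
          ring
  have hmain : ENNReal.ofReal |g x| * V ≤ K := by
    calc ENNReal.ofReal |g x| * V = ∫⁻ y in B, ENNReal.ofReal |g x| := by
          rw [setLIntegral_const]
      _ ≤ ∫⁻ y in B, (ENNReal.ofReal |g y| + ENNReal.ofReal (2 * r) *
            ∫⁻ t in Ioc (0 : ℝ) 1, ENNReal.ofReal (G (x + t • (y - x)))) :=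
          setLIntegral_mono' measurableSet_ball hpt
      _ = (∫⁻ y in B, ENNReal.ofReal |g y|) + ENNReal.ofReal (2 * r) *
            ∫⁻ y in B, ∫⁻ t in Ioc (0 : ℝ) 1, ENNReal.ofReal (G (x + t • (y - x))) := by
          rw [lintegral_add_right, lintegral_const_mul' _ _ ENNReal.ofReal_ne_top]
          exact (hGm2.lintegral_prod_right' (ν := volume.restrict (Ioc (0 : ℝ) 1))).const_mul _
      _ ≤ K := by
          refine add_le_add ?_ ?_
          · calc ∫⁻ y in B, ENNReal.ofReal |g y|
                ≤ ∫⁻ y in B, (1 + ENNReal.ofReal (|g y| ^ p)) := by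
                  refine lintegral_mono fun y => ?_
                  rw [← ENNReal.ofReal_one, ← ENNReal.ofReal_add zero_le_one (by positivity)]
                  refine ENNReal.ofReal_le_ofReal ?_
                  have := young_aux (abs_nonneg (g y)) one_pos hp1
                  simpa using this
              _ = V + ∫⁻ y in B, ENNReal.ofReal (|g y| ^ p) := by
                  rw [lintegral_add_left measurable_const, setLIntegral_const, one_mul]
              _ ≤ V + N := by gcongr
          · gcongr
            rw [lintegral_lintegral_swap hGm2.aemeasurable]
            calc _ ≤ ∫⁻ t in Ioc (0 : ℝ) 1, (V + N) * ENNReal.ofReal (t ^ (-(n : ℝ) / p)) :=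
                  setLIntegral_mono' measurableSet_Ioc hin
              _ = _ := by
                  rw [lintegral_const_mul' _ _ (ENNReal.add_ne_top.2 ⟨hVt, hN⟩)]
  have h3 : ENNReal.ofReal |g x| ≤ K / V := by
    rw [ENNReal.le_div_iff_mul_le (Or.inl hV0) (Or.inl hVt)]
    exact hmain
  have := (ENNReal.ofReal_le_iff_le_toReal (ENNReal.div_ne_top hKt hV0)).1 h3
  exact this


theorem clm_eq_sum {n : ℕ} (L : (Fin n → ℝ) →L[ℝ] ℝ) (x : Fin n → ℝ) :
    L x = ∑ i, x i * L (Pi.single i 1) := by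
  conv_lhs => rw [← Finset.univ_sum_single x]
  rw [map_sum]
  refine Finset.sum_congr rfl fun i _ => ?_
  have : (Pi.single i (x i) : Fin n → ℝ) = x i • Pi.single i 1 := by
    rw [← Pi.single_smul]; simp
  rw [this, map_smul, smul_eq_mul]

theorem clm_norm_le {n : ℕ} (L : (Fin n → ℝ) →L[ℝ] ℝ) : ‖L‖ ≤ ∑ i, |L (Pi.single i 1)| := by
  refine L.opNorm_le_bound (Finset.sum_nonneg fun _ _ => abs_nonneg _) fun x => ?_
  rw [clm_eq_sum, Finset.sum_mul]
  refine (norm_sum_le _ _).trans (Finset.sum_le_sum fun i _ => ?_)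
  rw [norm_mul, mul_comm]
  exact mul_le_mul_of_nonneg_left (norm_le_pi_norm x i) (abs_nonneg _)

theorem abs_le_vnorm {n : ℕ} (v : Fin n → ℝ) (i : Fin n) : |v i| ≤ vnorm v := by
  unfold vnorm
  rw [← Real.sqrt_sq_eq_abs]
  exact Real.sqrt_le_sqrt (Finset.single_le_sum (f := fun i => v i ^ 2)
    (fun _ _ => sq_nonneg _) (Finset.mem_univ i))

theorem abs_le_matNorm {n : ℕ} (A : Matrix (Fin n) (Fin n) ℝ) (i j : Fin n) :
    |A i j| ≤ matNorm A := by
  unfold matNorm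
  set T := LinearMap.toContinuousLinearMap (Matrix.toEuclideanLin A)
  have h := T.le_opNorm (EuclideanSpace.single j (1 : ℝ))
  have h1 : T (EuclideanSpace.single j (1 : ℝ)) i = A i j := by
    simp [T, Matrix.toLpLin_apply]
  have h2 := EuclideanSpace.norm_eq (T (EuclideanSpace.single j (1 : ℝ)))
  have h3 : |A i j| ≤ ‖T (EuclideanSpace.single j (1 : ℝ))‖ := by
    rw [← h1, ← Real.norm_eq_abs]
    exact PiLp.norm_apply_le _ i
  simpa using h3.trans h

theorem matNorm_le {n : ℕ} (A : Matrix (Fin n) (Fin n) ℝ) (c : ℝ) (hc : ∀ i j, |A i j| ≤ c)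
    (hc0 : 0 ≤ c) : matNorm A ≤ (n : ℝ) * (n * c) := by
  unfold matNorm
  refine ContinuousLinearMap.opNorm_le_bound _ (by positivity) fun x => ?_
  set y := LinearMap.toContinuousLinearMap (Matrix.toEuclideanLin A) x with hy
  have h1 : ∀ i, |y i| ≤ n * c * ‖x‖ := fun i => by
    have : y i = ∑ j, A i j * x j := by
      simp [hy, Matrix.toLpLin_apply, Matrix.mulVec, dotProduct]
    rw [this]
    refine (Finset.abs_sum_le_sum_abs _ _).trans ?_
    calc ∑ j, |A i j * x j| ≤ ∑ j : Fin n, c * ‖x‖ := by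
          refine Finset.sum_le_sum fun j _ => ?_
          rw [abs_mul]
          exact mul_le_mul (hc i j) (PiLp.norm_apply_le x j) (abs_nonneg _) hc0
      _ = _ := by simp; ring
  have hsum : y = ∑ i, EuclideanSpace.single i (y i) := by
    ext l
    simp
  calc ‖y‖ ≤ ∑ i, ‖EuclideanSpace.single i (y i)‖ := by
        conv_lhs => rw [hsum]
        exact norm_sum_le _ _
    _ ≤ ∑ i : Fin n, n * c * ‖x‖ := by
        refine Finset.sum_le_sum fun i _ => ?_
        simpa using h1 i
    _ = _ := by simp; ring

theorem matNorm_continuous {n : ℕ} : Continuous (matNorm (n := n)) := by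
  unfold matNorm
  refine Continuous.norm ?_
  exact (LinearMap.continuous_of_finiteDimensional
    (LinearMap.toContinuousLinearMap.toLinearMap ∘ₗ
      (Matrix.toEuclideanLin (𝕜 := ℝ) (m := Fin n) (n := Fin n)).toLinearMap))

theorem pd_contDiffOn {n : ℕ} {Ω : Set (Fin n → ℝ)} (hΩ : IsOpen Ω) {w : (Fin n → ℝ) → ℝ}
    (m : ℕ) (hw : ContDiffOn ℝ (m + 1 : ℕ) w Ω) (i : Fin n) : ContDiffOn ℝ m (pd i w) Ω := by
  have h : ContDiffOn ℝ m (fderiv ℝ w) Ω := hw.fderiv_of_isOpen hΩ (by norm_cast)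
  exact h.clm_apply contDiffOn_const

theorem c1_log_bounds {n : ℕ} (hn : 0 < n) (p : ℝ) (hp : (n : ℝ) < p) (x₀ : Fin n → ℝ) (r : ℝ)
    (hr : 0 < r) (M : ℝ) :
    ∃ C : ℝ, ∀ (Ω : Set (Fin n → ℝ)) (w : (Fin n → ℝ) → ℝ), IsOpen Ω → closure (ball x₀ r) ⊆ Ω →
      ContDiffOn ℝ 2 w Ω → W2pNorm p w (ball x₀ r) ≤ M →
      ∀ x ∈ ball x₀ r, |w x| ≤ C ∧ ∀ i, |pd i w x| ≤ C := by
  have hn1 : (1 : ℝ) ≤ n := by exact_mod_cast hn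
  have hp0 : 0 < p := by linarith
  set N : ENNReal := ENNReal.ofReal ((n : ℝ) ^ p) * ENNReal.ofReal (M ^ p) with hN
  obtain ⟨C, hC⟩ := morrey_sup hn p hp x₀ r hr N
    (ENNReal.mul_ne_top ENNReal.ofReal_ne_top ENNReal.ofReal_ne_top)
  refine ⟨C, fun Ω w hΩ hcl hw hW => ?_⟩
  have hBΩ : ball x₀ r ⊆ Ω := subset_closure.trans hcl
  have hpd : ∀ i, ContDiffOn ℝ 1 (pd i w) Ω := fun i => pd_contDiffOn hΩ 1 (by exact_mod_cast hw) i
  have hpd2 : ∀ i j, ContDiffOn ℝ 0 (pd j (pd i w)) Ω := fun i j =>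
    pd_contDiffOn hΩ 0 (by exact_mod_cast hpd i) j
  set Φ : (Fin n → ℝ) → ℝ := fun x =>
    |w x| ^ p + vnorm (grad w x) ^ p + matNorm (hess w x) ^ p with hΦ
  have hv0 : ∀ v : Fin n → ℝ, 0 ≤ vnorm v := fun v => Real.sqrt_nonneg _
  have hm0 : ∀ v : Matrix (Fin n) (Fin n) ℝ, 0 ≤ matNorm v := fun v => norm_nonneg _
  have t1 : ∀ x, 0 ≤ |w x| ^ p := fun x => Real.rpow_nonneg (abs_nonneg _) _
  have t2 : ∀ x, 0 ≤ vnorm (grad w x) ^ p := fun x => Real.rpow_nonneg (hv0 _) _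
  have t3 : ∀ x, 0 ≤ matNorm (hess w x) ^ p := fun x => Real.rpow_nonneg (hm0 _) _
  have hΦ0 : ∀ x, 0 ≤ Φ x := fun x => add_nonneg (add_nonneg (t1 x) (t2 x)) (t3 x)
  have hΦc : ContinuousOn Φ Ω := by
    refine ContinuousOn.add (ContinuousOn.add ?_ ?_) ?_
    · exact hw.continuousOn.abs.rpow_const fun _ _ => Or.inr hp0.le
    · refine ContinuousOn.rpow_const ?_ fun _ _ => Or.inr hp0.le
      refine ContinuousOn.sqrt ?_
      exact continuousOn_finsetSum _ fun i _ => (hpd i).continuousOn.pow 2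
    · refine ContinuousOn.rpow_const ?_ fun _ _ => Or.inr hp0.le
      refine matNorm_continuous.comp_continuousOn ?_
      refine continuousOn_pi.2 fun i => continuousOn_pi.2 fun j => ?_
      exact (hpd2 j i).continuousOn
  have hIntegr : IntegrableOn Φ (ball x₀ r) := by
    have hcomp : IsCompact (closure (ball x₀ r)) := isBounded_ball.isCompact_closure
    exact ((hΦc.mono hcl).integrableOn_compact hcomp).mono_set subset_closure
  have hI : ∫⁻ x in ball x₀ r, ENNReal.ofReal (Φ x) ≤ ENNReal.ofReal (M ^ p) := by
    rw [← ofReal_integral_eq_lintegral_ofReal hIntegr (Filter.Eventually.of_forall hΦ0)]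
    refine ENNReal.ofReal_le_ofReal ?_
    have hI0 : 0 ≤ ∫ x in ball x₀ r, Φ x := integral_nonneg hΦ0
    have hW' : (∫ x in ball x₀ r, Φ x) ^ (1 / p) ≤ M := hW
    have := Real.rpow_le_rpow (Real.rpow_nonneg hI0 _) hW' hp0.le
    rwa [← Real.rpow_mul hI0, one_div, inv_mul_cancel₀ hp0.ne', Real.rpow_one] at this
  have hgen : ∀ F : (Fin n → ℝ) → ℝ, (∀ x, F x ≤ (n : ℝ) ^ p * Φ x) →
      ∫⁻ x in ball x₀ r, ENNReal.ofReal (F x) ≤ N := by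
    intro F hF
    calc ∫⁻ x in ball x₀ r, ENNReal.ofReal (F x)
        ≤ ∫⁻ x in ball x₀ r, ENNReal.ofReal ((n : ℝ) ^ p) * ENNReal.ofReal (Φ x) := by
          refine lintegral_mono fun x => ?_
          rw [← ENNReal.ofReal_mul (by positivity)]
          exact ENNReal.ofReal_le_ofReal (hF x)
      _ = ENNReal.ofReal ((n : ℝ) ^ p) * ∫⁻ x in ball x₀ r, ENNReal.ofReal (Φ x) := by
          rw [lintegral_const_mul' _ _ ENNReal.ofReal_ne_top]
      _ ≤ N := mul_le_mul' le_rfl hI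
  have hnp : (1 : ℝ) ≤ (n : ℝ) ^ p := Real.one_le_rpow hn1 hp0.le
  have hone : ∀ x, Φ x ≤ (n : ℝ) ^ p * Φ x := fun x => le_mul_of_one_le_left (hΦ0 x) hnp
  have hscale : ∀ a b : ℝ, 0 ≤ a → 0 ≤ b → a ≤ n * b → a ^ p ≤ (n : ℝ) ^ p * b ^ p := by
    intro a b ha hb hab
    rw [← Real.mul_rpow (by positivity) hb]
    exact Real.rpow_le_rpow ha hab hp0.le
  intro x hx
  refine ⟨hC w ?_ ?_ ?_ ?_ x hx, fun i => hC (pd i w) ?_ ?_ ?_ ?_ x hx⟩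
  · exact fun z hz => (hw.differentiableOn (by norm_num)).differentiableAt (hΩ.mem_nhds (hBΩ hz))
  · exact (hw.continuousOn_fderiv_of_isOpen hΩ (by norm_num)).mono hBΩ
  · exact hgen _ fun x => le_trans (by have := t2 x; have := t3 x; simp only [hΦ]; linarith) (hone x)
  · refine hgen _ fun x => ?_
    have h : ‖fderiv ℝ w x‖ ≤ n * vnorm (grad w x) := by
      refine (clm_norm_le _).trans ?_
      calc ∑ i, |fderiv ℝ w x (Pi.single i 1)| ≤ ∑ i : Fin n, vnorm (grad w x) :=
            Finset.sum_le_sum fun i _ => abs_le_vnorm (grad w x) i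
        _ = _ := by simp
    refine (hscale _ _ (norm_nonneg _) (hv0 _) h).trans ?_
    refine mul_le_mul_of_nonneg_left ?_ (by positivity)
    have := t1 x; have := t3 x; simp only [hΦ]; linarith
  · exact fun z hz => ((hpd i).differentiableOn (by norm_num)).differentiableAt
      (hΩ.mem_nhds (hBΩ hz))
  · exact ((hpd i).continuousOn_fderiv_of_isOpen hΩ (by norm_num)).mono hBΩ
  · refine hgen _ fun x => le_trans ?_ (hone x)
    have h : |pd i w x| ^ p ≤ vnorm (grad w x) ^ p :=
      Real.rpow_le_rpow (abs_nonneg _) (abs_le_vnorm (grad w x) i) hp0.le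
    have := t1 x; have := t3 x; simp only [hΦ]; linarith
  · refine hgen _ fun x => ?_
    have h : ‖fderiv ℝ (pd i w) x‖ ≤ n * matNorm (hess w x) := by
      refine (clm_norm_le _).trans ?_
      calc ∑ j, |fderiv ℝ (pd i w) x (Pi.single j 1)| ≤ ∑ j : Fin n, matNorm (hess w x) :=
            Finset.sum_le_sum fun j _ => abs_le_matNorm (hess w x) j i
        _ = _ := by simp
    refine (hscale _ _ (norm_nonneg _) (hm0 _) h).trans ?_
    refine mul_le_mul_of_nonneg_left ?_ (by positivity)
    have := t1 x; have := t2 x; simp only [hΦ]; linarith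

theorem c1_bounds {n : ℕ} (hn : 0 < n) (p : ℝ) (hp : (n : ℝ) < p) (x₀ : Fin n → ℝ) (r : ℝ)
    (hr : 0 < r) (M : ℝ) :
    ∃ c C : ℝ, 0 < c ∧ 0 < C ∧ ∀ (Ω : Set (Fin n → ℝ)) (u : (Fin n → ℝ) → ℝ), IsOpen Ω →
      closure (ball x₀ r) ⊆ Ω → ContDiffOn ℝ 2 u Ω → (∀ x ∈ Ω, 0 < u x) →
      W2pNorm p (fun x => Real.log (u x)) (ball x₀ r) ≤ M →
      ∀ x ∈ ball x₀ r, c ≤ u x ∧ u x ≤ C ∧ ∀ i, |pd i u x| ≤ C := by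
  obtain ⟨C, hC⟩ := c1_log_bounds hn p hp x₀ r hr M
  refine ⟨Real.exp (-C), Real.exp C * (1 + |C|), Real.exp_pos _, by positivity,
    fun Ω u hΩ hcl hu hpos hW x hx => ?_⟩
  have hxΩ : x ∈ Ω := hcl (subset_closure hx)
  obtain ⟨h1, h2⟩ := hC Ω _ hΩ hcl (hu.log fun x hx => (hpos x hx).ne') hW x hx
  have hup := hpos x hxΩ
  rw [abs_le] at h1
  have hlow : Real.exp (-C) ≤ u x := by
    rw [← Real.le_log_iff_exp_le hup]; exact h1.1
  have hupp : u x ≤ Real.exp C := by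
    rw [← Real.log_le_iff_le_exp hup]; exact h1.2
  refine ⟨hlow, hupp.trans (le_mul_of_one_le_right (Real.exp_pos _).le (by
    have := abs_nonneg C; linarith)), fun i => ?_⟩
  have hd : DifferentiableAt ℝ u x :=
    (hu.differentiableOn (by norm_num)).differentiableAt (hΩ.mem_nhds hxΩ)
  have hpd : pd i (fun x => Real.log (u x)) x = (u x)⁻¹ * pd i u x := by
    unfold pd
    rw [(hd.hasFDerivAt.log hup.ne').fderiv]
    simp
  have h3 := h2 i
  rw [hpd] at h3
  have : pd i u x = u x * ((u x)⁻¹ * pd i u x) := by field_simp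
  rw [this, abs_mul, abs_of_pos hup]
  refine mul_le_mul hupp (h3.trans (by have := le_abs_self C; linarith)) (abs_nonneg _)
    (Real.exp_pos _).le


lemma Q_scalar {c C C' h a a' s s' H : ℝ} (hc : 0 < c) (hs : c ≤ s) (hs' : c ≤ s')
    (hsC' : s' ≤ C) (ha : |a| ≤ C) (hh : 0 < h) (hds : |s' - s| ≤ h * C')
    (hda : |a' - a - h * H| ≤ h) :
    a * (a' - a) / s - a ^ 2 * (s' - s) / (2 * s ^ 2)
      + h ^ 2 / (2 * C) * (H ^ 2 / 2 - (1 + C' * C / c) ^ 2)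
      ≤ a' ^ 2 / (2 * s') - a ^ 2 / (2 * s) := by
  have hs0 : 0 < s := hc.trans_le hs
  have hs0' : 0 < s' := hc.trans_le hs'
  have hC0 : 0 < C := hs0'.trans_le hsC'
  have hC' : 0 ≤ C' := by
    have := (abs_nonneg _).trans hds
    exact nonneg_of_mul_nonneg_right this hh
  set E := 1 + C' * C / c with hE
  set r := (a' - a - h * H) - (s' - s) * a / s with hr
  have hrE : |r| ≤ h * E := by
    have h1 : |(s' - s) * a / s| ≤ h * (C' * C / c) := by
      rw [abs_div, abs_mul, abs_of_pos hs0]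
      have : |s' - s| * |a| ≤ (h * C') * C :=
        mul_le_mul hds ha (abs_nonneg _) (by positivity)
      calc |s' - s| * |a| / s ≤ (h * C') * C / c := by gcongr
        _ = h * (C' * C / c) := by ring
    calc |r| ≤ |a' - a - h * H| + |(s' - s) * a / s| := abs_sub _ _
      _ ≤ h + h * (C' * C / c) := add_le_add hda h1
      _ = h * E := by rw [hE]; ring
  have hr2 : r ^ 2 ≤ (h * E) ^ 2 := sq_le_sq' (by linarith [abs_le.1 hrE]) (abs_le.1 hrE).2
  have hid : a' ^ 2 / (2 * s') - a ^ 2 / (2 * s) = a * (a' - a) / s - a ^ 2 * (s' - s) / (2 * s ^ 2)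
      + (h * H + r) ^ 2 / (2 * s') := by
    rw [hr]; field_simp; ring
  rw [hid]
  have h2 : h ^ 2 * (H ^ 2 / 2 - E ^ 2) ≤ (h * H + r) ^ 2 := by
    nlinarith [sq_nonneg (h * H + 2 * r)]
  have h3 : h ^ 2 / (2 * C) * (H ^ 2 / 2 - E ^ 2) ≤ (h * H + r) ^ 2 / (2 * s') := by
    calc h ^ 2 / (2 * C) * (H ^ 2 / 2 - E ^ 2) = h ^ 2 * (H ^ 2 / 2 - E ^ 2) / (2 * C) := by ring
      _ ≤ (h * H + r) ^ 2 / (2 * C) := by gcongr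
      _ ≤ _ := by gcongr
  linarith

lemma Q_vec {n : ℕ} {c C C' h s s' : ℝ} {a a' H : Fin n → ℝ} (hc : 0 < c) (hs : c ≤ s) (hs' : c ≤ s')
    (hsC' : s' ≤ C) (ha : ∀ i, |a i| ≤ C) (hh : 0 < h) (hds : |s' - s| ≤ h * C')
    (hda : ∀ i, |a' i - a i - h * H i| ≤ h) :
    (∑ i, a i * (a' i - a i)) / s - normSq a * (s' - s) / (2 * s ^ 2)
      + h ^ 2 / (2 * C) * ((∑ i, H i ^ 2) / 2 - n * (1 + C' * C / c) ^ 2)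
      ≤ normSq a' / (2 * s') - normSq a / (2 * s) := by
  have := Finset.sum_le_sum fun i (_ : i ∈ Finset.univ) =>
    Q_scalar hc hs hs' hsC' (ha i) hh hds (hda i)
  simp only [Finset.sum_add_distrib, Finset.sum_sub_distrib, ← Finset.sum_div, ← Finset.sum_mul,
    ← Finset.mul_sum] at this
  simpa [normSq] using this

lemma psi_norm {n : ℕ} {C' h s s' : ℝ} {x x' a a' H : Fin n → ℝ} (hh : 0 < h)
    (hx : ‖x' - x‖ ≤ h) (hds : |s' - s| ≤ h * C')
    (hda : ∀ i, |a' i - a i - h * H i| ≤ h) :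
    ‖((x', s', a') : (Fin n → ℝ) × ℝ × (Fin n → ℝ)) - (x, s, a)‖ ^ 2
      ≤ h ^ 2 * (1 + C' ^ 2 + 2 * n + 2 * ∑ i, H i ^ 2) := by
  have hb : ∀ i, (a' i - a i) ^ 2 ≤ h ^ 2 * (2 + 2 * H i ^ 2) := by
    intro i
    have := abs_le.1 (hda i)
    have h1 : (a' i - a i - h * H i) ^ 2 ≤ h ^ 2 := sq_le_sq' (by linarith) this.2
    nlinarith [sq_nonneg (a' i - a i - h * H i - h * H i)]
  have hS : 0 ≤ ∑ i, H i ^ 2 := Finset.sum_nonneg fun i _ => sq_nonneg _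
  have hY : (0:ℝ) ≤ h ^ 2 * (1 + C' ^ 2 + 2 * n + 2 * ∑ i, H i ^ 2) := by positivity
  have key : ‖((x', s', a') : (Fin n → ℝ) × ℝ × (Fin n → ℝ)) - (x, s, a)‖
      ≤ Real.sqrt (h ^ 2 * (1 + C' ^ 2 + 2 * n + 2 * ∑ i, H i ^ 2)) := by
    simp only [Prod.mk_sub_mk, Prod.norm_mk, max_le_iff]
    have hn0 : (0:ℝ) ≤ n := by positivity
    have hh2 : 0 < h ^ 2 := by positivity
    refine ⟨?_, ?_, ?_⟩
    · apply Real.le_sqrt_of_sq_le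
      have : ‖x' - x‖ ^ 2 ≤ h ^ 2 := by gcongr
      nlinarith [sq_nonneg C']
    · apply Real.le_sqrt_of_sq_le
      rw [Real.norm_eq_abs]
      have : |s' - s| ^ 2 ≤ (h * C') ^ 2 := by gcongr
      nlinarith [sq_nonneg C']
    · refine (pi_norm_le_iff_of_nonneg (Real.sqrt_nonneg _)).2 fun i => ?_
      apply Real.le_sqrt_of_sq_le
      rw [Real.norm_eq_abs, sq_abs, Pi.sub_apply]
      refine (hb i).trans ?_
      have h1 : H i ^ 2 ≤ ∑ i, H i ^ 2 :=
        Finset.single_le_sum (f := fun i => H i ^ 2) (fun i _ => sq_nonneg _) (Finset.mem_univ i)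
      have h2 : (1:ℝ) ≤ n := by
        have := i.pos; exact_mod_cast this
      have : 2 + 2 * H i ^ 2 ≤ 1 + C' ^ 2 + 2 * n + 2 * ∑ i, H i ^ 2 := by
        nlinarith [sq_nonneg C']
      gcongr
  calc _ ≤ (Real.sqrt (h ^ 2 * (1 + C' ^ 2 + 2 * n + 2 * ∑ i, H i ^ 2))) ^ 2 := by gcongr
    _ = _ := Real.sq_sqrt hY

lemma final_alg {τ v η ρ S a1 a2 G1 G2 G3 G4 G5 G6 G7 κ1 m : ℝ}
    (hv : 0 < v) (hη : 0 < η) (hηρ : η ≤ ρ) (hτ : 1 ≤ τ) (hS : 0 ≤ S)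
    (ha1 : 0 ≤ a1) (ha2 : 0 ≤ a2) (hG1 : 0 ≤ G1) (hG2 : 0 ≤ G2) (hG3 : 0 ≤ G3) (hG4 : 0 < G4)
    (hG5 : 0 ≤ G5) (hG6 : 0 ≤ G6) (hκ : 0 ≤ κ1) (hm : 0 ≤ m)
    (hτG : κ1 * G7 ≤ τ * (G4 / 2))
    (hvS : v ^ 2 ≤ m * S + 2)
    (hmain : τ * (-(G1 * (v / η)) - G2 * v + G4 * S - G5)
      - κ1 * (G3 * (v + v / η) + G6 + G7 * S) ≤ τ * (v * (a2 / η ^ 2 + a1 / η))) :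
    η ^ 2 * v ≤ (2 * m / G4) * (a2 + (a1 + G1 + κ1 * G3) * ρ + (G2 + κ1 * G3) * ρ ^ 2)
      + ((2 * m / G4) * ((G5 + κ1 * G6) * ρ ^ 2) * ρ ^ 2 + 2 * ρ ^ 4) + 1 := by
  have hρ : 0 < ρ := hη.trans_le hηρ
  have hτ0 : 0 < τ := by linarith
  -- divide by tau
  have h1 : G4 / 2 * S ≤ v * (a2 / η ^ 2 + a1 / η) + G1 * (v / η) + G2 * v + G5
      + κ1 * (G3 * (v + v / η) + G6) := by
    have h2 : κ1 * (G3 * (v + v / η) + G6) ≤ τ * (κ1 * (G3 * (v + v / η) + G6)) :=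
      le_mul_of_one_le_left (by positivity) hτ
    have h3 : κ1 * G7 * S ≤ τ * (G4 / 2) * S := by gcongr
    have h4 : τ * (G4 / 2 * S) ≤ τ * (v * (a2 / η ^ 2 + a1 / η) + G1 * (v / η) + G2 * v + G5
      + κ1 * (G3 * (v + v / η) + G6)) := by
      nlinarith
    exact le_of_mul_le_mul_left h4 hτ0
  set K1 := a2 + (a1 + G1 + κ1 * G3) * ρ + (G2 + κ1 * G3) * ρ ^ 2 with hK1
  set K2 := (G5 + κ1 * G6) * ρ ^ 2 with hK2
  have h5 : η ^ 2 * (G4 / 2 * S) ≤ K1 * v + K2 := by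
    calc η ^ 2 * (G4 / 2 * S) ≤ η ^ 2 * (v * (a2 / η ^ 2 + a1 / η) + G1 * (v / η) + G2 * v + G5
      + κ1 * (G3 * (v + v / η) + G6)) := by gcongr
      _ = (a2 + (a1 + G1 + κ1 * G3) * η + (G2 + κ1 * G3) * η ^ 2) * v
          + (G5 + κ1 * G6) * η ^ 2 := by field_simp; ring
      _ ≤ _ := by rw [hK1, hK2]; gcongr
  have hK1' : 0 ≤ K1 := by positivity
  have hK2' : 0 ≤ K2 := by positivity
  set P := η ^ 2 * v with hP
  have hP0 : 0 < P := by positivity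
  have h6 : P ^ 2 ≤ (2 * m / G4 * K1) * P + (2 * m / G4 * K2 * ρ ^ 2 + 2 * ρ ^ 4) := by
    calc P ^ 2 = η ^ 4 * v ^ 2 := by rw [hP]; ring
      _ ≤ η ^ 4 * (m * S + 2) := by gcongr
      _ = (2 * m / G4) * η ^ 2 * (η ^ 2 * (G4 / 2 * S)) + 2 * η ^ 4 := by field_simp
      _ ≤ (2 * m / G4) * η ^ 2 * (K1 * v + K2) + 2 * η ^ 4 := by gcongr
      _ = (2 * m / G4 * K1) * P + (2 * m / G4 * K2 * η ^ 2 + 2 * η ^ 4) := by rw [hP]; ring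
      _ ≤ _ := by gcongr
  set α := 2 * m / G4 * K1 with hα
  have hα0 : 0 ≤ α := by positivity
  set β := 2 * m / G4 * K2 * ρ ^ 2 + 2 * ρ ^ 4 with hβ
  have hβ0 : 0 ≤ β := by positivity
  by_contra hcon
  push Not at hcon
  nlinarith

/-- one-dimensional second derivative test -/
lemma second_deriv_test {F F' : ℝ → ℝ} {F2 : ℝ} (h1 : ∀ᶠ t in nhds 0, HasDerivAt F (F' t) t)
    (h2 : HasDerivAt F' F2 0) (hmax : IsLocalMax F 0) : F' 0 = 0 ∧ F2 ≤ 0 := by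
  have hd0 : F' 0 = 0 := hmax.hasDerivAt_eq_zero h1.self_of_nhds
  refine ⟨hd0, ?_⟩
  by_contra hcon
  push Not at hcon
  have hde : deriv F =ᶠ[nhds 0] F' := h1.mono fun t ht => ht.deriv
  have hdd : deriv (deriv F) 0 = F2 := by rw [hde.deriv_eq, h2.deriv]
  have hmin : IsLocalMin F 0 := isLocalMin_of_deriv_deriv_pos (by rw [hdd]; exact hcon)
    (by rw [h1.self_of_nhds.deriv, hd0]) h1.self_of_nhds.continuousAt
  have hconst : F =ᶠ[nhds 0] fun _ => F 0 := by
    filter_upwards [hmax, hmin] with t ht1 ht2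
    exact le_antisymm ht1 ht2
  have h3 : deriv F =ᶠ[nhds 0] fun _ => (0:ℝ) := by
    have := hconst.deriv
    refine this.trans ?_
    simp
  have h4 : deriv (deriv F) 0 = 0 := by rw [h3.deriv_eq]; simp
  linarith

lemma line_test {φ φ' : ℝ → ℝ} {φ2 η b : ℝ} (h1 : ∀ᶠ t in nhds 0, HasDerivAt φ (φ' t) t)
    (h2 : HasDerivAt φ' φ2 0) (hη : 0 < η)
    (hmax : IsLocalMax (fun t => (η - 2 * t * b - t ^ 2) ^ 2 * φ t) 0) :
    φ' 0 = 4 * φ 0 * b / η ∧ φ2 ≤ φ 0 * (24 * b ^ 2 / η ^ 2 + 4 / η) := by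
  have he : ∀ t : ℝ, HasDerivAt (fun t : ℝ => η - 2 * t * b - t ^ 2) (-2 * b - 2 * t) t := by
    intro t
    have := (((hasDerivAt_id t).const_mul 2).mul_const b).const_sub η
    have h3 := this.sub (hasDerivAt_pow 2 t)
    exact h3.congr_deriv (by simp)
  have he2 : ∀ t : ℝ, HasDerivAt (fun t : ℝ => -2 * b - 2 * t) (-2) t := by
    intro t
    have := ((hasDerivAt_id t).const_mul 2).const_sub (-2 * b)
    exact this.congr_deriv (by simp)
  have hF1 : ∀ᶠ t in nhds 0, HasDerivAt (fun t => (η - 2 * t * b - t ^ 2) ^ 2 * φ t)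
      (2 * (η - 2 * t * b - t ^ 2) * (-2 * b - 2 * t) * φ t + (η - 2 * t * b - t ^ 2) ^ 2 * φ' t) t := by
    filter_upwards [h1] with t ht
    have := ((he t).pow 2).mul ht
    exact this.congr_deriv (by simp)
  have hF2 : HasDerivAt (fun t => 2 * (η - 2 * t * b - t ^ 2) * (-2 * b - 2 * t) * φ t
      + (η - 2 * t * b - t ^ 2) ^ 2 * φ' t)
      ((8 * b ^ 2 - 4 * η) * φ 0 - 8 * η * b * φ' 0 + η ^ 2 * φ2) 0 := by
    have := ((((he 0).const_mul 2).mul (he2 0)).mul h1.self_of_nhds).add (((he 0).pow 2).mul h2)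
    exact this.congr_deriv (by simp; ring)
  obtain ⟨hz, hneg⟩ := second_deriv_test hF1 hF2 hmax
  have h5 : φ' 0 = 4 * φ 0 * b / η := by
    rw [eq_div_iff hη.ne']
    have : η * (φ' 0 * η) = η * (4 * φ 0 * b) := by
      simp at hz
      linarith
    exact mul_left_cancel₀ hη.ne' this
  refine ⟨h5, ?_⟩
  rw [h5] at hneg
  have h6 : (8 * b ^ 2 - 4 * η) * φ 0 - 8 * η * b * (4 * φ 0 * b / η) + η ^ 2 * φ2
    = η ^ 2 * (φ2 - φ 0 * (24 * b ^ 2 / η ^ 2 + 4 / η)) := by field_simp; ring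
  rw [h6] at hneg
  have := nonpos_of_mul_nonpos_right hneg (by positivity : 0 < η ^ 2)
  linarith


/-- sign of a direction -/
noncomputable def sg (b : Bool) : ℝ := if b then 1 else -1

lemma sg_sq (b : Bool) : sg b * sg b = 1 := by cases b <;> simp [sg]

lemma sg_abs (b : Bool) : |sg b| = 1 := by cases b <;> simp [sg]

/-- signed coordinate directions -/
noncomputable def dirv {n : ℕ} (m : Fin n × Bool) : Fin n → ℝ := sg m.2 • (Pi.single m.1 1 : Fin n → ℝ)

lemma dirv_norm {n : ℕ} (m : Fin n × Bool) : ‖dirv m‖ ≤ 1 := by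
  rw [dirv, norm_smul, Real.norm_eq_abs, sg_abs, one_mul]
  refine (pi_norm_le_iff_of_nonneg zero_le_one).2 fun i => ?_
  by_cases h : i = m.1
  · subst h; simp
  · simp [Pi.single_eq_of_ne h]

lemma fderiv_dirv {n : ℕ} (g : (Fin n → ℝ) → ℝ) (x : Fin n → ℝ) (m : Fin n × Bool) :
    fderiv ℝ g x (dirv m) = sg m.2 * pd m.1 g x := by
  simp [dirv, pd]

lemma line_hasDerivAt {n : ℕ} {g : (Fin n → ℝ) → ℝ} {x e : Fin n → ℝ} {t : ℝ}
    (hg : DifferentiableAt ℝ g (x + t • e)) :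
    HasDerivAt (fun t : ℝ => g (x + t • e)) (fderiv ℝ g (x + t • e) e) t := by
  have h1 : HasDerivAt (fun t : ℝ => x + t • e) e t := by
    have := ((hasDerivAt_id t).smul_const e).const_add x
    simpa using this
  exact hg.hasFDerivAt.comp_hasDerivAt t h1

lemma hess_symm {n : ℕ} {Ω : Set (Fin n → ℝ)} (hΩ : IsOpen Ω) {u : (Fin n → ℝ) → ℝ}
    (hu : ContDiffOn ℝ 2 u Ω) {x : Fin n → ℝ} (hx : x ∈ Ω) (i j : Fin n) :
    pd i (pd j u) x = pd j (pd i u) x := by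
  have hat : ContDiffAt ℝ 2 u x := hu.contDiffAt (hΩ.mem_nhds hx)
  have hs := hat.isSymmSndFDerivAt (by simp)
  have hd : DifferentiableAt ℝ (fderiv ℝ u) x :=
    (hat.fderiv_right (m := 1) (by norm_num)).differentiableAt (by norm_num)
  have key : ∀ i j : Fin n, pd i (pd j u) x
      = fderiv ℝ (fderiv ℝ u) x (Pi.single i 1) (Pi.single j 1) := by
    intro i j
    have : HasFDerivAt (pd j u) ((fderiv ℝ (fderiv ℝ u) x).flip (Pi.single j 1)) x := by
      have := hd.hasFDerivAt.clm_apply (hasFDerivAt_const (Pi.single j 1 : Fin n → ℝ) x)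
      simp only [ContinuousLinearMap.comp_zero, zero_add] at this
      exact this
    unfold pd at this ⊢
    rw [this.fderiv]
    rfl
  rw [key, key]
  exact hs _ _

lemma unif_c1 {n : ℕ} {Ω : Set (Fin n → ℝ)} (hΩ : IsOpen Ω) {g : (Fin n → ℝ) → ℝ}
    (hg : ContDiffOn ℝ 1 g Ω) {x₀ : Fin n → ℝ} {r1 r2 : ℝ} (hr : r1 < r2)
    (hB : closedBall x₀ r2 ⊆ Ω) {ε : ℝ} (hε : 0 < ε) :
    ∃ δ > 0, δ ≤ r2 - r1 ∧ ∀ x ∈ closedBall x₀ r1, ∀ e : Fin n → ℝ, ‖e‖ ≤ 1 → ∀ h : ℝ, 0 ≤ h → h < δ →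
      |g (x + h • e) - g x - h * fderiv ℝ g x e| ≤ ε * h := by
  have hc : ContinuousOn (fderiv ℝ g) (closedBall x₀ r2) :=
    (hg.continuousOn_fderiv_of_isOpen hΩ (by norm_num)).mono hB
  have huc := (isCompact_closedBall x₀ r2).uniformContinuousOn_of_continuous hc
  obtain ⟨δ, hδ, hδ'⟩ := Metric.uniformContinuousOn_iff.1 huc ε hε
  refine ⟨min δ (r2 - r1), lt_min hδ (by linarith), min_le_right _ _, ?_⟩
  intro x hx e he h h0 hh
  have hh1 : h < δ := hh.trans_le (min_le_left _ _)
  have hh2 : h < r2 - r1 := hh.trans_le (min_le_right _ _)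
  have hx' := mem_closedBall.1 hx
  have hsub : closedBall x h ⊆ closedBall x₀ r2 := by
    apply closedBall_subset_closedBall'
    linarith
  have hhe : ‖h • e‖ ≤ h := by
    rw [norm_smul, Real.norm_eq_abs, abs_of_nonneg h0]
    exact mul_le_of_le_one_right h0 he
  have hmem : x + h • e ∈ closedBall x h := by
    rw [mem_closedBall, dist_eq_norm]; simpa using hhe
  have hxm : x ∈ closedBall x h := mem_closedBall_self h0
  have := (convex_closedBall x h).norm_image_sub_le_of_norm_hasFDerivWithin_le' (f := g)
    (f' := fderiv ℝ g) (φ := fderiv ℝ g x) (C := ε) (x := x) (y := x + h • e)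
    (fun z hz => ((hg.differentiableOn (by norm_num)).differentiableAt
      (hΩ.mem_nhds (hB (hsub hz)))).hasFDerivAt.hasFDerivWithinAt)
    (fun z hz => by
      rw [← dist_eq_norm]
      refine (hδ' z (hsub hz) x (hsub hxm) ?_).le
      exact (mem_closedBall.1 hz).trans_lt hh1) hxm hmem
  simp only [add_sub_cancel_left, map_smul, smul_eq_mul, Real.norm_eq_abs] at this
  exact this.trans (by gcongr)

lemma taylor2 {n : ℕ} {Ω : Set (Fin n → ℝ)} (hΩ : IsOpen Ω) {u : (Fin n → ℝ) → ℝ}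
    (hu : ContDiffOn ℝ 2 u Ω) {x : Fin n → ℝ} {m : Fin n × Bool} {h ε : ℝ} (hh : 0 < h) (hε : 0 ≤ ε)
    (hseg : ∀ t ∈ Icc 0 h, x + t • dirv m ∈ Ω)
    (hb : ∀ t ∈ Icc 0 h, |pd m.1 u (x + t • dirv m) - pd m.1 u x - t * (sg m.2 * pd m.1 (pd m.1 u) x)| ≤ ε * t) :
    |u (x + h • dirv m) - u x - h * (sg m.2 * pd m.1 u x) - h ^ 2 / 2 * pd m.1 (pd m.1 u) x| ≤ ε * h ^ 2 := by
  set D := sg m.2 * pd m.1 u x with hD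
  set H := pd m.1 (pd m.1 u) x with hH
  have hder : ∀ t ∈ Icc 0 h, HasDerivWithinAt (fun t : ℝ => u (x + t • dirv m) - t * D - t ^ 2 / 2 * H)
      (sg m.2 * pd m.1 u (x + t • dirv m) - D - t * H) (Icc 0 h) t := by
    intro t ht
    have h1 := line_hasDerivAt (e := dirv m) ((hu.differentiableOn (by norm_num)).differentiableAt
      (hΩ.mem_nhds (hseg t ht)))
    rw [fderiv_dirv] at h1
    have h2 := (h1.sub ((hasDerivAt_id t).mul_const D)).sub
      (((hasDerivAt_pow 2 t).div_const 2).mul_const H)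
    refine (h2.congr_deriv ?_).hasDerivWithinAt
    simp
  have := norm_image_sub_le_of_norm_deriv_le_segment' hder (C := ε * h) (fun t ht => by
    have h3 := hb t (Ico_subset_Icc_self ht)
    have h4 : sg m.2 * pd m.1 u (x + t • dirv m) - D - t * H
        = sg m.2 * (pd m.1 u (x + t • dirv m) - pd m.1 u x - t * (sg m.2 * H)) := by
      rw [hD]
      linear_combination t * H * sg_sq m.2
    rw [h4, Real.norm_eq_abs, abs_mul, sg_abs, one_mul]
    refine h3.trans ?_
    have := ht.2
    gcongr) h (right_mem_Icc.2 hh.le)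
  simp only [Real.norm_eq_abs, zero_smul, add_zero, zero_mul, sub_zero] at this
  have e1 : u (x + h • dirv m) - u x - h * D - h ^ 2 / 2 * H
    = u (x + h • dirv m) - h * D - h ^ 2 / 2 * H - (u x - 0 ^ 2 / 2 * H) := by ring
  rw [e1]
  exact this.trans (le_of_eq (by ring))

lemma taylor1 {n : ℕ} {Ω : Set (Fin n → ℝ)} (hΩ : IsOpen Ω) {u : (Fin n → ℝ) → ℝ}
    (hu : ContDiffOn ℝ 2 u Ω) {x : Fin n → ℝ} {m : Fin n × Bool} {h C : ℝ} (hh : 0 < h)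
    (hseg : ∀ t ∈ Icc 0 h, x + t • dirv m ∈ Ω)
    (hb : ∀ t ∈ Icc 0 h, |pd m.1 u (x + t • dirv m)| ≤ C) :
    |u (x + h • dirv m) - u x| ≤ h * C := by
  have hder : ∀ t ∈ Icc 0 h, HasDerivWithinAt (fun t : ℝ => u (x + t • dirv m))
      (sg m.2 * pd m.1 u (x + t • dirv m)) (Icc 0 h) t := by
    intro t ht
    have h1 := line_hasDerivAt (e := dirv m) ((hu.differentiableOn (by norm_num)).differentiableAt
      (hΩ.mem_nhds (hseg t ht)))
    rw [fderiv_dirv] at h1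
    exact h1.hasDerivWithinAt
  have := norm_image_sub_le_of_norm_deriv_le_segment' hder (C := C) (fun t ht => by
    rw [Real.norm_eq_abs, abs_mul, sg_abs, one_mul]
    exact hb t (Ico_subset_Icc_self ht)) h (right_mem_Icc.2 hh.le)
  simp only [Real.norm_eq_abs, zero_smul, add_zero, sub_zero] at this
  linarith

lemma exists_h {n : ℕ} {Ω : Set (Fin n → ℝ)} (hΩ : IsOpen Ω) {u : (Fin n → ℝ) → ℝ}
    (hu : ContDiffOn ℝ 2 u Ω) {x₀ : Fin n → ℝ} {r1 r2 C : ℝ} (hr : r1 < r2)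
    (hB : closedBall x₀ r2 ⊆ Ω) (hC : ∀ x ∈ closedBall x₀ r2, ∀ i, |pd i u x| ≤ C) :
    ∃ h > 0, h ≤ r2 - r1 ∧ ∀ x ∈ closedBall x₀ r1,
      (∀ m i, |pd i u (x + h • dirv m) - pd i u x - h * (sg m.2 * pd m.1 (pd i u) x)| ≤ h) ∧
      (∀ m, |u (x + h • dirv m) - u x| ≤ h * C) ∧
      |∑ m, (u (x + h • dirv m) - u x) - h ^ 2 * lapl u x| ≤ h ^ 2 := by
  obtain ⟨ε, hε, hε1, hεn⟩ : ∃ ε : ℝ, 0 < ε ∧ ε ≤ 1 ∧ 2 * n * ε ≤ 1 := by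
    refine ⟨1 / (2 * n + 1), by positivity, ?_, ?_⟩
    · rw [div_le_one (by positivity)]; have : (0:ℝ) ≤ n := by positivity
      linarith
    · rw [mul_one_div, div_le_one (by positivity)]; linarith
  have h1 : ∀ i : Fin n, _ := fun i => unif_c1 hΩ (g := pd i u) (by exact_mod_cast pd_contDiffOn hΩ 1 (by exact_mod_cast hu) i) hr hB hε
  choose δ hδ0 hδr hδ using h1
  obtain ⟨h, hh0, hhr, hhδ⟩ : ∃ h > 0, h ≤ r2 - r1 ∧ ∀ i, h < δ i := by
    have hev : ∀ᶠ h in nhdsWithin (0:ℝ) (Ioi 0), (0 < h ∧ h ≤ r2 - r1) ∧ ∀ i, h < δ i := by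
      refine (Filter.Eventually.and self_mem_nhdsWithin ?_).and (Filter.eventually_all.2 fun i => ?_)
      · exact Filter.Eventually.filter_mono nhdsWithin_le_nhds (eventually_le_nhds (by linarith))
      · exact Filter.Eventually.filter_mono nhdsWithin_le_nhds (eventually_lt_nhds (hδ0 i))
    obtain ⟨h, hh⟩ := hev.exists
    exact ⟨h, hh.1.1, hh.1.2, hh.2⟩
  refine ⟨h, hh0, hhr, fun x hx => ?_⟩
  have hsegB : ∀ m : Fin n × Bool, ∀ t ∈ Icc 0 h, x + t • dirv m ∈ closedBall x₀ r2 := by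
    intro m t ht
    rw [mem_closedBall]
    have h2 : dist (x + t • dirv m) x ≤ h := by
      rw [dist_eq_norm, add_sub_cancel_left, norm_smul, Real.norm_eq_abs, abs_of_nonneg ht.1]
      exact (mul_le_of_le_one_right ht.1 (dirv_norm m)).trans ht.2
    have := dist_triangle (x + t • dirv m) x x₀
    have := mem_closedBall.1 hx
    linarith
  have hpdt : ∀ (m : Fin n × Bool) i, ∀ t ∈ Icc 0 h,
      |pd i u (x + t • dirv m) - pd i u x - t * (sg m.2 * pd m.1 (pd i u) x)| ≤ ε * t := by
    intro m i t ht
    have := hδ i x hx (dirv m) (dirv_norm m) t ht.1 (ht.2.trans_lt (hhδ i))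
    rwa [fderiv_dirv] at this
  refine ⟨fun m i => ?_, fun m => ?_, ?_⟩
  · refine (hpdt m i h (right_mem_Icc.2 hh0.le)).trans ?_
    exact mul_le_of_le_one_left hh0.le hε1
  · exact taylor1 hΩ hu hh0 (fun t ht => hB (hsegB m t ht)) fun t ht => hC _ (hsegB m t ht) _
  · have ht : ∀ m : Fin n × Bool, _ := fun m => taylor2 hΩ hu (m := m) hh0 hε.le
      (fun t ht => hB (hsegB m t ht)) (hpdt m m.1)
    have e1 : ∑ m : Fin n × Bool, (u (x + h • dirv m) - u x) - h ^ 2 * lapl u x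
      = ∑ m : Fin n × Bool, (u (x + h • dirv m) - u x - h * (sg m.2 * pd m.1 u x)
          - h ^ 2 / 2 * pd m.1 (pd m.1 u) x) := by
      simp only [Finset.sum_sub_distrib, lapl, Fintype.sum_prod_type, Fintype.sum_bool, sg,
        Finset.mul_sum]
      simp only [← Finset.sum_sub_distrib]
      refine Finset.sum_congr rfl fun i _ => ?_
      simp
      ring
    rw [e1]
    calc _ ≤ ∑ m : Fin n × Bool, ε * h ^ 2 := (Finset.abs_sum_le_sum_abs _ _).trans
            (Finset.sum_le_sum fun m _ => ht m)
      _ = (2 * n * ε) * h ^ 2 := by simp; ring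
      _ ≤ h ^ 2 := mul_le_of_le_one_left (by positivity) hεn

lemma f_consts {n : ℕ} {Ω : Set (Fin n → ℝ)} (hΩ : IsOpen Ω)
    {f : ((Fin n → ℝ) × ℝ × (Fin n → ℝ)) → ℝ}
    (hfpos : ∀ y ∈ Ω ×ˢ ((Ioi (0 : ℝ)) ×ˢ (univ : Set (Fin n → ℝ))), 0 < f y)
    (hf : C11On f (Ω ×ˢ ((Ioi (0 : ℝ)) ×ˢ (univ : Set (Fin n → ℝ)))))
    {x₀ : Fin n → ℝ} {r : ℝ} (hB : closedBall x₀ r ⊆ Ω) {c C : ℝ} (hc : 0 < c) :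
    ∃ f0 f1 L : ℝ, 0 < f0 ∧ 0 ≤ f1 ∧ 0 ≤ L ∧
      ∀ z ∈ closedBall x₀ r ×ˢ (Icc c C ×ˢ closedBall (0 : Fin n → ℝ) C),
        f0 ≤ f z ∧ f z ≤ f1 ∧ ‖fderiv ℝ f z‖ ≤ L ∧
        ∀ z' ∈ closedBall x₀ r ×ˢ (Icc c C ×ˢ closedBall (0 : Fin n → ℝ) C),
          f z + fderiv ℝ f z (z' - z) - L * ‖z' - z‖ ^ 2 ≤ f z' := by
  set V := Ω ×ˢ ((Ioi (0 : ℝ)) ×ˢ (univ : Set (Fin n → ℝ))) with hV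
  set K := closedBall x₀ r ×ˢ (Icc c C ×ˢ closedBall (0 : Fin n → ℝ) C) with hK
  have hVo : IsOpen V := hΩ.prod (isOpen_Ioi.prod isOpen_univ)
  have hKc : IsCompact K := (isCompact_closedBall _ _).prod (isCompact_Icc.prod (isCompact_closedBall _ _))
  have hKconv : Convex ℝ K := (convex_closedBall _ _).prod ((convex_Icc _ _).prod (convex_closedBall _ _))
  have hKV : K ⊆ V := by
    rintro ⟨x, s, a⟩ ⟨h1, h2, h3⟩
    exact ⟨hB h1, lt_of_lt_of_le hc h2.1, mem_univ _⟩
  obtain ⟨hf1, hf2⟩ := hf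
  have hdiff : ∀ z ∈ V, DifferentiableAt ℝ f z := fun z hz =>
    (hf1.differentiableOn (by norm_num)).differentiableAt (hVo.mem_nhds hz)
  have heq : ∀ z ∈ V, fderivWithin ℝ f V z = fderiv ℝ f z := fun z hz =>
    fderivWithin_of_isOpen hVo hz
  have hcont : ContinuousOn f K := hf1.continuousOn.mono hKV
  have hcd : ContinuousOn (fderiv ℝ f) K :=
    (hf1.continuousOn_fderiv_of_isOpen hVo (by norm_num)).mono hKV
  obtain ⟨f0, hf0, hf0'⟩ : ∃ f0 > 0, ∀ z ∈ K, f0 ≤ f z := by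
    rcases K.eq_empty_or_nonempty with he | hne
    · exact ⟨1, one_pos, fun z hz => by simp [he] at hz⟩
    · obtain ⟨z0, hz0, hmin⟩ := hKc.exists_isMinOn hne hcont
      exact ⟨f z0, hfpos _ (hKV hz0), fun z hz => hmin hz⟩
  obtain ⟨f1, hf1b⟩ := hKc.exists_bound_of_continuousOn hcont
  obtain ⟨L1, hL1⟩ := hKc.exists_bound_of_continuousOn hcd
  have hll : LocallyLipschitzOn K (fderivWithin ℝ f V) := by
    intro z hz
    obtain ⟨k, t, ht, hk⟩ := hf2 z (hKV hz)
    exact ⟨k, t, nhdsWithin_mono _ hKV ht, hk⟩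
  obtain ⟨k, hk⟩ := hll.exists_lipschitzOnWith_of_compact hKc
  refine ⟨f0, |f1|, max |L1| k, hf0, abs_nonneg _, (abs_nonneg _).trans (le_max_left _ _), ?_⟩
  intro z hz
  refine ⟨hf0' z hz, ?_, ?_, ?_⟩
  · exact (le_abs_self _).trans ((hf1b z hz).trans (le_abs_self _))
  · exact (hL1 z hz).trans ((le_abs_self _).trans (le_max_left _ _))
  · intro z' hz'
    have hseg : segment ℝ z z' ⊆ K := hKconv.segment_subset hz hz'
    have := (convex_segment z z').norm_image_sub_le_of_norm_hasFDerivWithin_le' (f := f)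
      (f' := fderiv ℝ f) (φ := fderiv ℝ f z) (C := max |L1| k * ‖z' - z‖) (x := z) (y := z')
      (fun y hy => (hdiff y (hKV (hseg hy))).hasFDerivAt.hasFDerivWithinAt)
      (fun y hy => by
        have h1 := hk.dist_le_mul y (hseg hy) z hz
        rw [heq _ (hKV (hseg hy)), heq _ (hKV hz), dist_eq_norm, dist_eq_norm] at h1
        refine h1.trans ?_
        have h2 : ‖y - z‖ ≤ ‖z' - z‖ := by
          obtain ⟨t, ht, rfl⟩ := (segment_eq_image' ℝ z z') ▸ hy
          simp only [add_sub_cancel_left, norm_smul, Real.norm_eq_abs, abs_of_nonneg ht.1]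
          exact mul_le_of_le_one_left (norm_nonneg _) ht.2
        exact mul_le_mul (le_max_right _ _) h2 (norm_nonneg _) ((abs_nonneg _).trans (le_max_left _ _)))
      (left_mem_segment _ _ _) (right_mem_segment _ _ _)
    have h3 := (abs_le.1 (Real.norm_eq_abs _ ▸ this)).1
    nlinarith


lemma line2 {n : ℕ} {Ω : Set (Fin n → ℝ)} (hΩ : IsOpen Ω) {u : (Fin n → ℝ) → ℝ}
    (hu : ContDiffOn ℝ 2 u Ω) {y : Fin n → ℝ} (hy : y ∈ Ω) (e : Fin n → ℝ) :
    (∀ᶠ t in nhds (0:ℝ), HasDerivAt (fun t : ℝ => u (y + t • e)) (fderiv ℝ u (y + t • e) e) t) ∧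
    HasDerivAt (fun t : ℝ => fderiv ℝ u (y + t • e) e) (e ⬝ᵥ hess u y *ᵥ e) 0 := by
  constructor
  · have hc : Filter.Tendsto (fun t : ℝ => y + t • e) (nhds 0) (nhds y) := by
      have : Continuous (fun t : ℝ => y + t • e) := by fun_prop
      simpa using this.tendsto 0
    filter_upwards [hc.eventually (hΩ.mem_nhds hy)] with t ht
    exact line_hasDerivAt ((hu.differentiableOn (by norm_num)).differentiableAt (hΩ.mem_nhds ht))
  · have h1 : (fun t : ℝ => fderiv ℝ u (y + t • e) e) = fun t : ℝ => ∑ i, e i * pd i u (y + t • e) := by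
      funext t
      exact clm_eq_sum _ _
    rw [h1]
    have h2 : ∀ i ∈ Finset.univ, HasDerivAt (fun t : ℝ => e i * pd i u (y + t • e))
        (e i * fderiv ℝ (pd i u) y e) 0 := by
      intro i _
      have hd : DifferentiableAt ℝ (pd i u) (y + (0:ℝ) • e) := by
        have : ContDiffOn ℝ (1:ℕ) (pd i u) Ω := pd_contDiffOn hΩ 1 (by exact_mod_cast hu) i
        simpa using (this.differentiableOn (by norm_num)).differentiableAt (hΩ.mem_nhds hy)
      have := (line_hasDerivAt hd).const_mul (e i)
      simpa using this
    refine (HasDerivAt.fun_sum h2).congr_deriv ?_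
    have h3 : ∀ i, fderiv ℝ (pd i u) y e = ∑ j, e j * pd j (pd i u) y := fun i => clm_eq_sum _ _
    simp only [h3, dotProduct, mulVec, hess, Matrix.of_apply, Finset.mul_sum]
    rw [Finset.sum_comm]
    refine Finset.sum_congr rfl fun i _ => Finset.sum_congr rfl fun j _ => by ring

/-- unnormalised second difference sum -/
noncomputable def VV {n : ℕ} (u : (Fin n → ℝ) → ℝ) (h : ℝ) (x : Fin n → ℝ) : ℝ :=
  ∑ m : Fin n × Bool, (u (x + h • dirv m) - u x)

lemma max_test {n : ℕ} {Ω : Set (Fin n → ℝ)} (hΩ : IsOpen Ω) {u : (Fin n → ℝ) → ℝ}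
    (hu : ContDiffOn ℝ 2 u Ω) {x y : Fin n → ℝ} (hx : x ∈ Ω) {h ρ : ℝ}
    (hxm : ∀ m : Fin n × Bool, x + h • dirv m ∈ Ω)
    (hη : 0 < ρ ^ 2 - ∑ i, (x i - y i) ^ 2)
    (hmax : IsLocalMax (fun x => (ρ ^ 2 - ∑ i, (x i - y i) ^ 2) ^ 2 * VV u h x) x)
    (e : Fin n → ℝ) (he : ∑ i, e i ^ 2 = 1) :
    ∑ m : Fin n × Bool, (fderiv ℝ u (x + h • dirv m) e - fderiv ℝ u x e)
      = 4 * VV u h x * (∑ i, (x i - y i) * e i) / (ρ ^ 2 - ∑ i, (x i - y i) ^ 2) ∧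
    ∑ m : Fin n × Bool, (e ⬝ᵥ hess u (x + h • dirv m) *ᵥ e - e ⬝ᵥ hess u x *ᵥ e)
      ≤ VV u h x * (24 * (∑ i, (x i - y i) * e i) ^ 2 / (ρ ^ 2 - ∑ i, (x i - y i) ^ 2) ^ 2
        + 4 / (ρ ^ 2 - ∑ i, (x i - y i) ^ 2)) := by
  have hl := line2 hΩ hu hx e
  have hlm := fun m => line2 hΩ hu (hxm m) e
  have h1 : ∀ᶠ t in nhds (0:ℝ), HasDerivAt (fun t : ℝ => ∑ m : Fin n × Bool,
      (u (x + h • dirv m + t • e) - u (x + t • e)))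
      (∑ m : Fin n × Bool, (fderiv ℝ u (x + h • dirv m + t • e) e - fderiv ℝ u (x + t • e) e)) t := by
    filter_upwards [hl.1, Filter.eventually_all.2 fun m => (hlm m).1] with t ht1 ht2
    exact HasDerivAt.fun_sum fun m _ => (ht2 m).sub ht1
  have h2 : HasDerivAt (fun t : ℝ => ∑ m : Fin n × Bool,
      (fderiv ℝ u (x + h • dirv m + t • e) e - fderiv ℝ u (x + t • e) e))
      (∑ m : Fin n × Bool, (e ⬝ᵥ hess u (x + h • dirv m) *ᵥ e - e ⬝ᵥ hess u x *ᵥ e)) 0 :=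
    HasDerivAt.fun_sum fun m _ => (hlm m).2.sub hl.2
  have hm2 : IsLocalMax (fun t : ℝ => (ρ ^ 2 - ∑ i, (x i - y i) ^ 2
      - 2 * t * (∑ i, (x i - y i) * e i) - t ^ 2) ^ 2 * ∑ m : Fin n × Bool,
      (u (x + h • dirv m + t • e) - u (x + t • e))) 0 := by
    have htend : Filter.Tendsto (fun t : ℝ => x + t • e) (nhds 0) (nhds x) := by
      have : Continuous (fun t : ℝ => x + t • e) := by fun_prop
      simpa using this.tendsto 0
    have hident : ∀ t : ℝ, (ρ ^ 2 - ∑ i, (x i - y i) ^ 2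
        - 2 * t * (∑ i, (x i - y i) * e i) - t ^ 2) ^ 2 * ∑ m : Fin n × Bool,
        (u (x + h • dirv m + t • e) - u (x + t • e))
        = (ρ ^ 2 - ∑ i, ((x + t • e) i - y i) ^ 2) ^ 2 * VV u h (x + t • e) := by
      intro t
      have e1 : ∑ i, ((x + t • e) i - y i) ^ 2
          = ∑ i, (x i - y i) ^ 2 + 2 * t * (∑ i, (x i - y i) * e i) + t ^ 2 * ∑ i, e i ^ 2 := by
        rw [Finset.mul_sum, Finset.mul_sum, ← Finset.sum_add_distrib, ← Finset.sum_add_distrib]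
        refine Finset.sum_congr rfl fun i _ => ?_
        simp
        ring
      have e2 : VV u h (x + t • e) = ∑ m : Fin n × Bool,
          (u (x + h • dirv m + t • e) - u (x + t • e)) := by
        unfold VV
        refine Finset.sum_congr rfl fun m _ => ?_
        rw [add_right_comm]
      rw [e1, e2, he]; ring
    have hev := htend.eventually hmax
    unfold IsLocalMax IsMaxFilter
    filter_upwards [hev] with t ht
    rw [hident t, hident 0]
    simpa using ht
  have := line_test h1 h2 hη hm2
  simpa [VV] using this


/-- the conformal Hessian -/
noncomputable def Au {n : ℕ} (u : (Fin n → ℝ) → ℝ) (x : Fin n → ℝ) : Matrix (Fin n) (Fin n) ℝ :=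
  hess u x - (normSq (grad u x) / (2 * u x)) • (1 : Matrix (Fin n) (Fin n) ℝ)

lemma Au_herm {n : ℕ} {Ω : Set (Fin n → ℝ)} (hΩ : IsOpen Ω) {u : (Fin n → ℝ) → ℝ}
    (hu : ContDiffOn ℝ 2 u Ω) {x : Fin n → ℝ} (hx : x ∈ Ω) : (Au u x).IsHermitian := by
  have h1 : (hess u x).IsHermitian := by
    ext i j
    simp [hess, Matrix.conjTranspose_apply, hess_symm hΩ hu hx i j]
  have h2 : ((normSq (grad u x) / (2 * u x)) • (1 : Matrix (Fin n) (Fin n) ℝ)).IsHermitian := by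
    ext i j
    simp [Matrix.conjTranspose_apply, Matrix.one_apply, eq_comm]
  exact h1.sub h2

lemma Au_quad {n : ℕ} (u : (Fin n → ℝ) → ℝ) (x e : Fin n → ℝ) (he : ∑ j, e j ^ 2 = 1) :
    e ⬝ᵥ hess u x *ᵥ e = e ⬝ᵥ Au u x *ᵥ e + normSq (grad u x) / (2 * u x) := by
  have h1 : hess u x = Au u x + (normSq (grad u x) / (2 * u x)) • (1 : Matrix (Fin n) (Fin n) ℝ) := by
    simp [Au]
  have h2 : e ⬝ᵥ e = 1 := by
    rw [← he]; simp [dotProduct, sq]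
  rw [h1, Matrix.add_mulVec, dotProduct_add, Matrix.smul_mulVec, Matrix.one_mulVec,
    dotProduct_smul, h2]
  simp

lemma sum_dirv {n : ℕ} : ∑ m : Fin n × Bool, dirv m = 0 := by
  simp [Fintype.sum_prod_type, dirv, sg]

lemma point_main {n k : ℕ} (hkn : k + 2 ≤ n) {Ω : Set (Fin n → ℝ)} (hΩ : IsOpen Ω)
    {u : (Fin n → ℝ) → ℝ} (hu : ContDiffOn ℝ 2 u Ω)
    {f : ((Fin n → ℝ) × ℝ × (Fin n → ℝ)) → ℝ}
    (heq : ∀ x ∈ Ω, esymmMat (k + 2) (Au u x) = f (x, u x, grad u x) ^ (k + 2) ∧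
      GammaPlus (k + 2) (Au u x))
    (hfpos : ∀ x ∈ Ω, 0 < f (x, u x, grad u x))
    {x y : Fin n → ℝ} (hx : x ∈ Ω) {h ρ c C L : ℝ} (hh : 0 < h) (hρ : 0 < ρ) (hc : 0 < c) (hL : 0 ≤ L)
    (hxm : ∀ m : Fin n × Bool, x + h • dirv m ∈ Ω)
    (hux : c ≤ u x) (hgx : ∀ i, |pd i u x| ≤ C)
    (hum : ∀ m : Fin n × Bool, c ≤ u (x + h • dirv m) ∧ u (x + h • dirv m) ≤ C)
    (hd1 : ∀ m : Fin n × Bool, ∀ i,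
      |pd i u (x + h • dirv m) - pd i u x - h * (sg m.2 * pd m.1 (pd i u) x)| ≤ h)
    (hd0 : ∀ m : Fin n × Bool, |u (x + h • dirv m) - u x| ≤ h * C)
    (hfd : ‖fderiv ℝ f (x, u x, grad u x)‖ ≤ L)
    (hft : ∀ m : Fin n × Bool, f (x, u x, grad u x)
      + fderiv ℝ f (x, u x, grad u x)
        ((x + h • dirv m, u (x + h • dirv m), grad u (x + h • dirv m)) - (x, u x, grad u x))
      - L * ‖((x + h • dirv m, u (x + h • dirv m), grad u (x + h • dirv m)) :
          (Fin n → ℝ) × ℝ × (Fin n → ℝ)) - (x, u x, grad u x)‖ ^ 2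
      ≤ f (x + h • dirv m, u (x + h • dirv m), grad u (x + h • dirv m)))
    {η v : ℝ} (hηd : η = ρ ^ 2 - ∑ i, (x i - y i) ^ 2) (hη : 0 < η)
    (hvd : VV u h x = h ^ 2 * v) (hv : 0 < v)
    (hmax : IsLocalMax (fun x => (ρ ^ 2 - ∑ i, (x i - y i) ^ 2) ^ 2 * VV u h x) x) :
    ∃ τ : ℝ, 0 ≤ τ ∧
      (Au u x).trace * (f (x, u x, grad u x) ^ (k + 2)) ^ k ≤ τ ^ (k + 1) ∧
      τ * (-((4 * n * C * ρ / c) * (v / η)) - (n * C ^ 2 / (2 * c ^ 2)) * v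
          + (1 / (2 * C)) * (∑ l, ∑ i, pd l (pd i u) x ^ 2) - n * n * (1 + C * C / c) ^ 2 / C)
        - (((k:ℝ) + 2) * f (x, u x, grad u x) ^ (k + 1)) * ((L * (1 + 4 * ρ)) * (v + v / η)
          + L * (2 * n * (1 + C ^ 2 + 2 * n)) + (4 * L) * (∑ l, ∑ i, pd l (pd i u) x ^ 2))
      ≤ τ * (v * (24 * ρ ^ 2 / η ^ 2 + 4 / η)) := by
  set α := f (x, u x, grad u x) with hα
  have hα0 : 0 < α := hfpos x hx
  have hn0 : 0 < n := by omega
  have hn1 : (0:ℝ) < n := by exact_mod_cast hn0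
  have hC0 : 0 < C := hc.trans_le ((hum (⟨0, hn0⟩, true)).1.trans (hum (⟨0, hn0⟩, true)).2)
  obtain ⟨w, ξ, hw, hξ, hB, hAe, htr⟩ := linear_functional hkn (Au_herm hΩ hu hx) (heq x hx).2 α hα0
    (heq x hx).1
  set τ := ∑ i, w i with hτ
  have hτ0 : 0 ≤ τ := Finset.sum_nonneg fun i _ => hw i
  refine ⟨τ, hτ0, htr, ?_⟩
  set κ := ((k:ℝ) + 2) * α ^ (k + 1) with hκ
  have hκ0 : 0 ≤ κ := by positivity
  set S := ∑ l, ∑ i, pd l (pd i u) x ^ 2 with hS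
  -- coordinates close to y
  have hsum : ∑ i, (x i - y i) ^ 2 ≤ ρ ^ 2 := by linarith
  -- gradient of V
  have hgrad : ∀ i, ∑ m : Fin n × Bool, (pd i u (x + h • dirv m) - pd i u x)
      = h ^ 2 * (4 * v * (x i - y i) / η) := by
    intro i
    have he : ∑ j, (Pi.single i (1:ℝ) : Fin n → ℝ) j ^ 2 = 1 := by
      rw [Finset.sum_eq_single i] <;> simp +contextual [Pi.single_apply]
    have := (max_test hΩ hu hx hxm (by rw [← hηd]; exact hη) hmax _ he).1
    have h2 : ∑ j, (x j - y j) * (Pi.single i (1:ℝ) : Fin n → ℝ) j = x i - y i := by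
      rw [Finset.sum_eq_single i] <;> simp +contextual [Pi.single_apply]
    rw [h2, hvd, ← hηd] at this
    unfold pd
    rw [this]; ring
  have habs : ∀ i, |x i - y i| ≤ ρ := by
    intro i
    apply abs_le_of_sq_le_sq _ hρ.le
    exact (Finset.single_le_sum (f := fun i => (x i - y i) ^ 2) (fun i _ => sq_nonneg _)
      (Finset.mem_univ i)).trans hsum
  have hgi : ∀ i, |4 * v * (x i - y i) / η| ≤ 4 * ρ * (v / η) := by
    intro i
    rw [abs_div, abs_mul, abs_of_pos hη, abs_of_pos (by positivity : 0 < 4 * v)]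
    calc 4 * v * |x i - y i| / η ≤ 4 * v * ρ / η := by gcongr; exact habs i
      _ = _ := by ring
  -- upper bound
  have hup : ∑ m : Fin n × Bool, (∑ i, w i * (ξ i ⬝ᵥ hess u (x + h • dirv m) *ᵥ ξ i)
      - ∑ i, w i * (ξ i ⬝ᵥ hess u x *ᵥ ξ i)) ≤ h ^ 2 * (τ * (v * (24 * ρ ^ 2 / η ^ 2 + 4 / η))) := by
    have e1 : ∑ m : Fin n × Bool, (∑ i, w i * (ξ i ⬝ᵥ hess u (x + h • dirv m) *ᵥ ξ i)
      - ∑ i, w i * (ξ i ⬝ᵥ hess u x *ᵥ ξ i))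
      = ∑ i, w i * ∑ m : Fin n × Bool, (ξ i ⬝ᵥ hess u (x + h • dirv m) *ᵥ ξ i
        - ξ i ⬝ᵥ hess u x *ᵥ ξ i) := by
      simp only [← Finset.sum_sub_distrib, Finset.mul_sum]
      rw [Finset.sum_comm]
      refine Finset.sum_congr rfl fun i _ => Finset.sum_congr rfl fun j _ => by ring
    rw [e1]
    have e2 : h ^ 2 * (τ * (v * (24 * ρ ^ 2 / η ^ 2 + 4 / η)))
      = ∑ i, w i * (h ^ 2 * v * (24 * ρ ^ 2 / η ^ 2 + 4 / η)) := by
      rw [← Finset.sum_mul]; ring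
    rw [e2]
    refine Finset.sum_le_sum fun i _ => mul_le_mul_of_nonneg_left ?_ (hw i)
    have := (max_test hΩ hu hx hxm (by rw [← hηd]; exact hη) hmax _ (hξ i)).2
    rw [← hηd, hvd] at this
    refine this.trans ?_
    have hcs : (∑ j, (x j - y j) * ξ i j) ^ 2 ≤ ρ ^ 2 := by
      have := Finset.sum_mul_sq_le_sq_mul_sq Finset.univ (fun j => x j - y j) (ξ i)
      rw [hξ i, mul_one] at this
      exact this.trans hsum
    gcongr
  -- lower bound
  have hquad : ∀ z, ∑ i, w i * (ξ i ⬝ᵥ hess u z *ᵥ ξ i)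
      = ∑ i, w i * (ξ i ⬝ᵥ Au u z *ᵥ ξ i) + τ * (normSq (grad u z) / (2 * u z)) := by
    intro z
    rw [hτ, Finset.sum_mul, ← Finset.sum_add_distrib]
    refine Finset.sum_congr rfl fun i _ => ?_
    rw [Au_quad u z _ (hξ i)]; ring
  have hlow : ∀ m : Fin n × Bool,
      κ * (f (x + h • dirv m, u (x + h • dirv m), grad u (x + h • dirv m)) - α)
        + τ * (normSq (grad u (x + h • dirv m)) / (2 * u (x + h • dirv m))
          - normSq (grad u x) / (2 * u x))
      ≤ ∑ i, w i * (ξ i ⬝ᵥ hess u (x + h • dirv m) *ᵥ ξ i)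
        - ∑ i, w i * (ξ i ⬝ᵥ hess u x *ᵥ ξ i) := by
    intro m
    have h1 := hB _ (Au_herm hΩ hu (hxm m)) (heq _ (hxm m)).2 _ (hfpos _ (hxm m)) (heq _ (hxm m)).1
    rw [hquad, hquad, hAe]
    have h2 : ((k:ℝ) + 2) * α ^ (k + 2) = κ * α := by rw [hκ]; ring
    rw [h2]
    linarith
  -- the psi part
  have hS2 : ∑ m : Fin n × Bool, ∑ i, (sg m.2 * pd m.1 (pd i u) x) ^ 2 = 2 * S := by
    have : ∀ m : Fin n × Bool, ∑ i, (sg m.2 * pd m.1 (pd i u) x) ^ 2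
        = ∑ i, pd m.1 (pd i u) x ^ 2 := fun m => by
      refine Finset.sum_congr rfl fun i _ => ?_
      rw [mul_pow, sq (sg m.2), sg_sq, one_mul]
    simp only [this, Fintype.sum_prod_type, Fintype.sum_bool]
    rw [Finset.sum_add_distrib]; ring
  have hcard : ∑ m : Fin n × Bool, (1:ℝ) = 2 * n := by simp; ring
  have hpsi : -(h ^ 2 * ((L * (1 + 4 * ρ)) * (v + v / η)
          + L * (2 * n * (1 + C ^ 2 + 2 * n)) + (4 * L) * S))
      ≤ ∑ m : Fin n × Bool, (f (x + h • dirv m, u (x + h • dirv m), grad u (x + h • dirv m)) - α) := by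
    set D := fderiv ℝ f (x, u x, grad u x) with hD
    have h1 : ∀ m : Fin n × Bool, D ((x + h • dirv m, u (x + h • dirv m), grad u (x + h • dirv m))
          - (x, u x, grad u x)) - L * (h ^ 2 * ((1 + C ^ 2 + 2 * n) * 1
            + 2 * ∑ i, (sg m.2 * pd m.1 (pd i u) x) ^ 2))
        ≤ f (x + h • dirv m, u (x + h • dirv m), grad u (x + h • dirv m)) - α := by
      intro m
      have h2 := hft m
      have hxx : ‖x + h • dirv m - x‖ ≤ h := by
        rw [add_sub_cancel_left, norm_smul, Real.norm_eq_abs, abs_of_pos hh]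
        exact mul_le_of_le_one_right hh.le (dirv_norm m)
      have h3 := psi_norm (n := n) (a := grad u x) (a' := grad u (x + h • dirv m))
        (H := fun i => sg m.2 * pd m.1 (pd i u) x) hh hxx (hd0 m) (hd1 m)
      have h4 := mul_le_mul_of_nonneg_left h3 hL
      rw [mul_one]
      linarith
    refine le_trans ?_ (Finset.sum_le_sum fun m _ => h1 m)
    rw [Finset.sum_sub_distrib, ← map_sum, ← Finset.mul_sum, ← Finset.mul_sum,
      Finset.sum_add_distrib, ← Finset.mul_sum, ← Finset.mul_sum, hcard, hS2]
    have h5 : |D (∑ m : Fin n × Bool, ((x + h • dirv m, u (x + h • dirv m), grad u (x + h • dirv m))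
          - (x, u x, grad u x)))| ≤ L * (h ^ 2 * ((1 + 4 * ρ) * (v + v / η))) := by
      refine (D.le_opNorm _).trans ?_
      refine mul_le_mul hfd ?_ (norm_nonneg _) hL
      have e1 : ∑ m : Fin n × Bool, (((x + h • dirv m, u (x + h • dirv m), grad u (x + h • dirv m)) :
          (Fin n → ℝ) × ℝ × (Fin n → ℝ)) - (x, u x, grad u x))
          = (0, h ^ 2 * v, fun i => h ^ 2 * (4 * v * (x i - y i) / η)) := by
        refine Prod.ext ?_ (Prod.ext ?_ ?_)
        · rw [Prod.fst_sum]
          simp [← Finset.smul_sum, sum_dirv]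
        · rw [Prod.snd_sum, Prod.fst_sum, ← hvd]
          simp [VV]
        · rw [Prod.snd_sum, Prod.snd_sum]
          funext i
          refine Eq.trans ?_ (hgrad i)
          simp [grad]
      rw [e1]
      have hvη : 0 < v / η := by positivity
      have hpos : 0 ≤ h ^ 2 * ((1 + 4 * ρ) * (v + v / η)) := by positivity
      simp only [Prod.norm_mk, max_le_iff]
      refine ⟨by simpa using hpos, ?_, ?_⟩
      · rw [Real.norm_eq_abs, abs_of_pos (by positivity)]
        have : v ≤ (1 + 4 * ρ) * (v + v / η) := by nlinarith [mul_pos hρ hv, mul_pos hρ hvη]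
        gcongr
      · refine (pi_norm_le_iff_of_nonneg hpos).2 fun i => ?_
        rw [Real.norm_eq_abs, abs_mul, abs_of_pos (by positivity : 0 < h ^ 2)]
        have : 4 * ρ * (v / η) ≤ (1 + 4 * ρ) * (v + v / η) := by
          nlinarith [mul_pos hρ hv, mul_pos hρ hvη]
        exact mul_le_mul_of_nonneg_left ((hgi i).trans this) (by positivity)
    have h6 := (abs_le.1 h5).1
    linarith
  -- the Q part
  have hQ : h ^ 2 * (-((4 * n * C * ρ / c) * (v / η)) - (n * C ^ 2 / (2 * c ^ 2)) * v
          + (1 / (2 * C)) * S - n * n * (1 + C * C / c) ^ 2 / C)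
      ≤ ∑ m : Fin n × Bool, (normSq (grad u (x + h • dirv m)) / (2 * u (x + h • dirv m))
          - normSq (grad u x) / (2 * u x)) := by
    have h1 : ∀ m : Fin n × Bool, _ := fun m => Q_vec (n := n) (a := grad u x) (a' := grad u (x + h • dirv m))
        (H := fun i => sg m.2 * pd m.1 (pd i u) x) hc hux (hum m).1 (hum m).2 hgx hh (hd0 m) (hd1 m)
    refine le_trans ?_ (Finset.sum_le_sum fun m _ => h1 m)
    have e1 : ∑ m : Fin n × Bool, ((∑ i, grad u x i * (grad u (x + h • dirv m) i - grad u x i)) / u x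
        - normSq (grad u x) * (u (x + h • dirv m) - u x) / (2 * u x ^ 2)
        + h ^ 2 / (2 * C) * ((∑ i, (sg m.2 * pd m.1 (pd i u) x) ^ 2) / 2 - n * (1 + C * C / c) ^ 2))
      = (∑ i, grad u x i * (h ^ 2 * (4 * v * (x i - y i) / η))) / u x
        - normSq (grad u x) * (h ^ 2 * v) / (2 * u x ^ 2)
        + h ^ 2 / (2 * C) * (S - 2 * n * (n * (1 + C * C / c) ^ 2)) := by
      have e2 : ∑ m : Fin n × Bool, (u (x + h • dirv m) - u x) = h ^ 2 * v := hvd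
      rw [Finset.sum_add_distrib, Finset.sum_sub_distrib, ← Finset.sum_div, ← Finset.sum_div,
        ← Finset.mul_sum, ← Finset.mul_sum, e2, Finset.sum_sub_distrib, ← Finset.sum_div, hS2,
        Finset.sum_comm]
      have e3 : ∀ i, ∑ m : Fin n × Bool, grad u x i * (grad u (x + h • dirv m) i - grad u x i)
          = grad u x i * (h ^ 2 * (4 * v * (x i - y i) / η)) := by
        intro i
        rw [← Finset.mul_sum, ← hgrad i]; rfl
      rw [Finset.sum_congr rfl fun i _ => e3 i]
      congr 1
      congr 1
      rw [Finset.sum_const, Finset.card_univ, Fintype.card_prod, Fintype.card_fin,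
        Fintype.card_bool, nsmul_eq_mul]
      push_cast
      ring
    rw [e1]
    have hu0 : 0 < u x := hc.trans_le hux
    have b1 : |(∑ i, grad u x i * (h ^ 2 * (4 * v * (x i - y i) / η))) / u x|
        ≤ h ^ 2 * ((4 * n * C * ρ / c) * (v / η)) := by
      rw [abs_div, abs_of_pos hu0]
      have : |∑ i, grad u x i * (h ^ 2 * (4 * v * (x i - y i) / η))|
          ≤ ∑ i : Fin n, C * (h ^ 2 * (4 * ρ * (v / η))) := by
        refine (Finset.abs_sum_le_sum_abs _ _).trans (Finset.sum_le_sum fun i _ => ?_)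
        rw [abs_mul, abs_mul, abs_of_pos (by positivity : 0 < h ^ 2)]
        refine mul_le_mul (hgx i) ?_ (by positivity) hC0.le
        exact mul_le_mul_of_nonneg_left (hgi i) (by positivity)
      calc _ ≤ (∑ i : Fin n, C * (h ^ 2 * (4 * ρ * (v / η)))) / c := by gcongr
        _ = _ := by simp; ring
    have b2 : normSq (grad u x) * (h ^ 2 * v) / (2 * u x ^ 2)
        ≤ h ^ 2 * ((n * C ^ 2 / (2 * c ^ 2)) * v) := by
      have : normSq (grad u x) ≤ n * C ^ 2 := by
        calc normSq (grad u x) ≤ ∑ i : Fin n, C ^ 2 := Finset.sum_le_sum fun i _ => by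
              rw [← sq_abs]
              exact pow_le_pow_left₀ (abs_nonneg _) (hgx i) 2
          _ = _ := by simp
      calc _ ≤ n * C ^ 2 * (h ^ 2 * v) / (2 * c ^ 2) := by gcongr
        _ = _ := by ring
    have b1' := (abs_le.1 b1).1
    have e4 : h ^ 2 / (2 * C) * (S - 2 * n * (n * (1 + C * C / c) ^ 2))
      = h ^ 2 * ((1 / (2 * C)) * S - n * n * (1 + C * C / c) ^ 2 / C) := by
      field_simp
    rw [e4]
    linarith
  have hfin := (Finset.sum_le_sum fun m (_ : m ∈ Finset.univ) => hlow m).trans hup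
  rw [Finset.sum_add_distrib, ← Finset.mul_sum, ← Finset.mul_sum] at hfin
  have m1 := mul_le_mul_of_nonneg_left hpsi hκ0
  have m2 := mul_le_mul_of_nonneg_left hQ hτ0
  have hh2 : 0 < h ^ 2 := by positivity
  refine le_of_mul_le_mul_left ?_ hh2
  calc _ = τ * (h ^ 2 * (-((4 * n * C * ρ / c) * (v / η)) - (n * C ^ 2 / (2 * c ^ 2)) * v
          + (1 / (2 * C)) * S - n * n * (1 + C * C / c) ^ 2 / C))
        + κ * -(h ^ 2 * ((L * (1 + 4 * ρ)) * (v + v / η)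
          + L * (2 * n * (1 + C ^ 2 + 2 * n)) + (4 * L) * S)) := by ring
    _ ≤ _ := by linarith


lemma Au_trace {n : ℕ} (u : (Fin n → ℝ) → ℝ) (x : Fin n → ℝ) :
    (Au u x).trace = lapl u x - n * (normSq (grad u x) / (2 * u x)) := by
  rw [Au, Matrix.trace_sub, Matrix.trace_smul, Matrix.trace_one]
  simp [Matrix.trace, lapl, hess]
  ring

lemma lapl_sq {n : ℕ} (u : (Fin n → ℝ) → ℝ) (x : Fin n → ℝ) :
    lapl u x ^ 2 ≤ n * ∑ l, ∑ i, pd l (pd i u) x ^ 2 := by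
  have h1 := sq_sum_le_card_mul_sum_sq (s := Finset.univ) (f := fun l : Fin n => pd l (pd l u) x)
  rw [Finset.card_univ, Fintype.card_fin] at h1
  refine h1.trans (mul_le_mul_of_nonneg_left (Finset.sum_le_sum fun l _ => ?_) (by positivity))
  exact Finset.single_le_sum (f := fun i => pd l (pd i u) x ^ 2) (fun i _ => sq_nonneg _)
    (Finset.mem_univ l)

lemma normSq_le {n : ℕ} {a : Fin n → ℝ} {C : ℝ} (ha : ∀ i, |a i| ≤ C) : normSq a ≤ n * C ^ 2 := by
  calc normSq a ≤ ∑ i : Fin n, C ^ 2 := Finset.sum_le_sum fun i _ => by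
        rw [← sq_abs]
        exact pow_le_pow_left₀ (abs_nonneg _) (ha i) 2
    _ = _ := by simp

set_option maxHeartbeats 4000000 in
theorem main_est {n : ℕ} (k : ℕ) (hkn : k + 2 ≤ n)
    (Ω : Set (Fin n → ℝ)) (hΩ : IsOpen Ω)
    (p : ℝ) (hp : (n : ℝ) < p)
    (f : ((Fin n → ℝ) × ℝ × (Fin n → ℝ)) → ℝ)
    (hfpos : ∀ y ∈ Ω ×ˢ ((Ioi (0 : ℝ)) ×ˢ (univ : Set (Fin n → ℝ))), 0 < f y)
    (hf : C11On f (Ω ×ˢ ((Ioi (0 : ℝ)) ×ˢ (univ : Set (Fin n → ℝ)))))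
    (x₀ : Fin n → ℝ) (R : ℝ) (hR : 0 < R)
    (hball : closure (ball x₀ (2 * R)) ⊆ Ω)
    (M : ℝ) :
    ∃ B : ℝ, ∀ u : (Fin n → ℝ) → ℝ,
      ContDiffOn ℝ 2 u Ω →
      (∀ x ∈ Ω, 0 < u x) →
      (∀ x ∈ Ω, esymmMat (k + 2) (Au u x) = f (x, u x, grad u x) ^ (k + 2) ∧
        GammaPlus (k + 2) (Au u x)) →
      W2pNorm p (fun x => Real.log (u x)) (ball x₀ (2 * R)) ≤ M →
      ∀ x ∈ ball x₀ R, matNorm (hess u x) ≤ B := by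
  have hn0 : 0 < n := by omega
  have hn1 : (0:ℝ) < n := by exact_mod_cast hn0
  obtain ⟨c, C, hc, hC, hcC⟩ := c1_bounds hn0 p hp x₀ (2 * R) (by positivity) M
  have hcl : closedBall x₀ (2 * R) ⊆ Ω := by
    rwa [closure_ball x₀ (by positivity)] at hball
  obtain ⟨f0, f1, L, hf0, hf1, hL, hfK⟩ := f_consts hΩ hfpos hf hcl (c := c) (C := C) hc
  obtain ⟨ρ, hρ⟩ : ∃ ρ, ρ = R / 2 := ⟨_, rfl⟩
  have hρ0 : 0 < ρ := by rw [hρ]; positivity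
  obtain ⟨κ1, hκ1⟩ : ∃ κ1, κ1 = ((k:ℝ) + 2) * f1 ^ (k + 1) := ⟨_, rfl⟩
  have hκ10 : 0 ≤ κ1 := by rw [hκ1]; positivity
  obtain ⟨N, hN1, hN2⟩ : ∃ N : ℝ, 1 ≤ N ∧ κ1 * (4 * L) ≤ N * ((1 / (2 * C)) / 2) := by
    refine ⟨max 1 (κ1 * (4 * L) / ((1 / (2 * C)) / 2)), le_max_left _ _, ?_⟩
    rw [← div_le_iff₀ (by positivity)]
    exact le_max_right _ _
  obtain ⟨Λ, hΛ⟩ : ∃ Λ, Λ = N ^ (k + 1) / (f0 ^ (k + 2)) ^ k := ⟨_, rfl⟩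
  have hΛ0 : 0 ≤ Λ := by rw [hΛ]; positivity
  obtain ⟨B1, hB1⟩ : ∃ B1, B1 = (2 * (2 * n) / (1 / (2 * C))) * (24 * ρ ^ 2
        + (4 + 4 * n * C * ρ / c + κ1 * (L * (1 + 4 * ρ))) * ρ ^ 2
        + (n * C ^ 2 / (2 * c ^ 2) + κ1 * (L * (1 + 4 * ρ))) * (ρ ^ 2) ^ 2)
      + ((2 * (2 * n) / (1 / (2 * C))) * ((n * n * (1 + C * C / c) ^ 2 / C
        + κ1 * (L * (2 * n * (1 + C ^ 2 + 2 * n)))) * (ρ ^ 2) ^ 2) * (ρ ^ 2) ^ 2 + 2 * (ρ ^ 2) ^ 4) + 1 :=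
    ⟨_, rfl⟩
  have hB10 : 0 ≤ B1 := by rw [hB1]; positivity
  obtain ⟨B2, hB2⟩ : ∃ B2, B2 = (ρ ^ 2) ^ 2 * (Λ + n * (n * C ^ 2 / (2 * c)) + 1) := ⟨_, rfl⟩
  have hB20 : 0 ≤ B2 := by rw [hB2]; positivity
  obtain ⟨T, hT⟩ : ∃ T, T = (B1 + B2) / (ρ ^ 2) ^ 2 + 1 := ⟨_, rfl⟩
  have hT0 : 0 ≤ T := by rw [hT]; positivity
  refine ⟨n * (n * (T + n * C ^ 2 / (2 * c))), ?_⟩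
  intro u hu hupos heq hW y hy
  have hbnd := hcC Ω u hΩ hball hu hupos hW
  have hBΩ : ball x₀ (2 * R) ⊆ Ω := ball_subset_closedBall.trans hcl
  have hQle : ∀ x ∈ ball x₀ (2 * R), 0 ≤ normSq (grad u x) / (2 * u x) ∧
      normSq (grad u x) / (2 * u x) ≤ n * C ^ 2 / (2 * c) := by
    intro x hx
    obtain ⟨h1, h2, h3⟩ := hbnd x hx
    have h4 : 0 ≤ normSq (grad u x) := Finset.sum_nonneg fun i _ => sq_nonneg _
    have h5 : 0 < u x := hc.trans_le h1
    refine ⟨by positivity, ?_⟩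
    have h6 := normSq_le (a := grad u x) h3
    gcongr
  have hfpos' : ∀ x ∈ Ω, 0 < f (x, u x, grad u x) := fun x hx =>
    hfpos _ ⟨hx, hupos x hx, mem_univ _⟩
  have hzK : ∀ x ∈ ball x₀ (2 * R), (x, u x, grad u x)
      ∈ closedBall x₀ (2 * R) ×ˢ (Icc c C ×ˢ closedBall (0 : Fin n → ℝ) C) := by
    intro x hx
    obtain ⟨h1, h2, h3⟩ := hbnd x hx
    refine ⟨ball_subset_closedBall hx, ⟨h1, h2⟩, ?_⟩
    rw [mem_closedBall_zero_iff]
    exact (pi_norm_le_iff_of_nonneg hC.le).2 h3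
  have h74 : closedBall x₀ (7 * R / 4) ⊆ ball x₀ (2 * R) :=
    closedBall_subset_ball (by linarith)
  obtain ⟨h, hh0, hhr, hh⟩ := exists_h hΩ hu (x₀ := x₀) (r1 := 3 * R / 2) (r2 := 7 * R / 4) (C := C)
    (by linarith) (h74.trans hBΩ) (fun x hx => (hbnd x (h74 hx)).2.2)
  have hshift : ∀ x ∈ closedBall x₀ (3 * R / 2), ∀ m : Fin n × Bool,
      x + h • dirv m ∈ ball x₀ (2 * R) := by
    intro x hx m
    apply h74
    rw [mem_closedBall]
    have h2 : dist (x + h • dirv m) x ≤ h := by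
      rw [dist_eq_norm, add_sub_cancel_left, norm_smul, Real.norm_eq_abs, abs_of_pos hh0]
      exact mul_le_of_le_one_right hh0.le (dirv_norm m)
    have := dist_triangle (x + h • dirv m) x x₀
    have := mem_closedBall.1 hx
    linarith
  have h32 : closedBall x₀ (3 * R / 2) ⊆ ball x₀ (2 * R) :=
    closedBall_subset_ball (by linarith)
  set D : Set (Fin n → ℝ) := {x | ∑ i, (x i - y i) ^ 2 ≤ ρ ^ 2} with hD
  have hDy : D ⊆ closedBall y ρ := by
    intro x hx
    rw [mem_closedBall, dist_eq_norm]
    refine (pi_norm_le_iff_of_nonneg hρ0.le).2 fun i => ?_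
    rw [Real.norm_eq_abs, Pi.sub_apply]
    apply abs_le_of_sq_le_sq _ hρ0.le
    exact (Finset.single_le_sum (f := fun i => (x i - y i) ^ 2) (fun i _ => sq_nonneg _)
      (Finset.mem_univ i)).trans hx
  have hDx : D ⊆ closedBall x₀ (3 * R / 2) := by
    refine hDy.trans (closedBall_subset_closedBall' ?_)
    have := mem_ball.1 hy
    rw [hρ]; linarith
  have hqc : Continuous fun x : Fin n → ℝ => ∑ i, (x i - y i) ^ 2 := by fun_prop
  have hDc : IsCompact D :=
    (isCompact_closedBall y ρ).of_isClosed_subset (isClosed_le hqc continuous_const) hDy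
  have hyD : y ∈ D := by
    show ∑ i, (y i - y i) ^ 2 ≤ ρ ^ 2
    simp; positivity
  have hVc : ContinuousOn (VV u h) D := by
    unfold VV
    refine continuousOn_finsetSum _ fun m _ => ContinuousOn.sub ?_ ?_
    · refine hu.continuousOn.comp (by fun_prop) fun x hx => hBΩ (hshift x (hDx hx) m)
    · exact hu.continuousOn.mono fun x hx => hBΩ (h32 (hDx hx))
  set G : (Fin n → ℝ) → ℝ := fun x => (ρ ^ 2 - ∑ i, (x i - y i) ^ 2) ^ 2 * VV u h x with hG
  have hGc : ContinuousOn G D :=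
    ((continuous_const.sub hqc).pow 2).continuousOn.mul hVc
  obtain ⟨x, hxD, hxmax⟩ := hDc.exists_isMaxOn ⟨y, hyD⟩ hGc
  have hh2 : 0 < h ^ 2 := by positivity
  have hGx : G x ≤ h ^ 2 * (B1 + B2) := by
    by_cases hV : VV u h x ≤ 0
    · have h1 : G x ≤ 0 := mul_nonpos_of_nonneg_of_nonpos (sq_nonneg _) hV
      have : 0 ≤ h ^ 2 * (B1 + B2) := by positivity
      linarith
    push Not at hV
    obtain ⟨η, hη⟩ : ∃ η, η = ρ ^ 2 - ∑ i, (x i - y i) ^ 2 := ⟨_, rfl⟩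
    have hη0 : 0 ≤ η := by rw [hη]; exact sub_nonneg.2 hxD
    have hGη : G x = η ^ 2 * VV u h x := by rw [hη]
    rcases hη0.eq_or_lt with hz | hηpos
    · rw [hGη, ← hz]
      have : 0 ≤ h ^ 2 * (B1 + B2) := by positivity
      simpa using this
    have hηρ : η ≤ ρ ^ 2 := by
      rw [hη]
      have : 0 ≤ ∑ i, (x i - y i) ^ 2 := Finset.sum_nonneg fun i _ => sq_nonneg _
      linarith
    have hloc : IsLocalMax G x := by
      refine hxmax.isLocalMax ?_
      have : {z : Fin n → ℝ | ∑ i, (z i - y i) ^ 2 < ρ ^ 2} ∈ nhds x :=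
        (isOpen_lt hqc continuous_const).mem_nhds (by
          show ∑ i, (x i - y i) ^ 2 < ρ ^ 2
          linarith)
      exact Filter.mem_of_superset this fun z hz =>
        (show ∑ i, (z i - y i) ^ 2 ≤ ρ ^ 2 from le_of_lt hz)
    obtain ⟨v, hv⟩ : ∃ v, v = VV u h x / h ^ 2 := ⟨_, rfl⟩
    have hvd : VV u h x = h ^ 2 * v := by rw [hv]; field_simp
    have hv0 : 0 < v := by rw [hv]; positivity
    have hx32 := hDx hxD
    have hx2 := h32 hx32
    have hxΩ := hBΩ hx2
    obtain ⟨hd1, hd0, hlap⟩ := hh x hx32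
    have hlap' : |v - lapl u x| ≤ 1 := by
      have e1 : VV u h x - h ^ 2 * lapl u x = h ^ 2 * (v - lapl u x) := by rw [hvd]; ring
      have e2 : |VV u h x - h ^ 2 * lapl u x| ≤ h ^ 2 := hlap
      rw [e1, abs_mul, abs_of_pos hh2] at e2
      exact le_of_mul_le_mul_left (by linarith) hh2
    have hlap1 := abs_le.1 hlap'
    have hfx := hfK _ (hzK x hx2)
    rw [hGη, hvd]
    have hgoal : η ^ 2 * v ≤ B1 + B2 := by
      by_cases htrace : (Au u x).trace < Λ
      · have h1 := Au_trace u x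
        have h2 := (hQle x hx2).2
        have h3 : n * (normSq (grad u x) / (2 * u x)) ≤ n * (n * C ^ 2 / (2 * c)) := by gcongr
        have h4 : v ≤ Λ + n * (n * C ^ 2 / (2 * c)) + 1 := by linarith
        have h5 : η ^ 2 * v ≤ B2 := by
          rw [hB2]
          exact mul_le_mul (by gcongr) h4 hv0.le (by positivity)
        linarith
      · push Not at htrace
        obtain ⟨τ, hτ0, htr, hmain⟩ := point_main hkn hΩ hu heq hfpos' hxΩ hh0 hρ0 hc hL
          (fun m => hBΩ (hshift x hx32 m)) (hbnd x hx2).1 (hbnd x hx2).2.2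
          (fun m => ⟨(hbnd _ (hshift x hx32 m)).1, (hbnd _ (hshift x hx32 m)).2.1⟩)
          hd1 hd0 hfx.2.2.1 (fun m => hfx.2.2.2 _ (hzK _ (hshift x hx32 m))) hη hηpos hvd hv0 hloc
        have hτN : N ≤ τ := by
          have h1 : N ^ (k + 1) ≤ τ ^ (k + 1) := by
            refine le_trans ?_ htr
            calc N ^ (k + 1) = Λ * (f0 ^ (k + 2)) ^ k := by rw [hΛ]; field_simp
              _ ≤ _ := by
                have := hfx.1
                refine mul_le_mul htrace (by gcongr) (by positivity) (hΛ0.trans htrace)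
          exact le_of_pow_le_pow_left₀ (by omega) hτ0 h1
        have hSn : 0 ≤ ∑ l, ∑ i, pd l (pd i u) x ^ 2 :=
          Finset.sum_nonneg fun l _ => Finset.sum_nonneg fun i _ => sq_nonneg _
        have hvS : v ^ 2 ≤ (2 * n) * (∑ l, ∑ i, pd l (pd i u) x ^ 2) + 2 := by
          have h1 := lapl_sq u x
          have h2 : (v - lapl u x) ^ 2 ≤ 1 := by
            rw [← sq_abs]; exact pow_le_one₀ (abs_nonneg _) hlap'
          nlinarith [sq_nonneg (v - lapl u x - lapl u x)]
        have hκle : ((k:ℝ) + 2) * f (x, u x, grad u x) ^ (k + 1) ≤ κ1 := by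
          rw [hκ1]
          have h1 := hfx.2.1
          have h2 := hfpos' x hxΩ
          exact mul_le_mul_of_nonneg_left (pow_le_pow_left₀ h2.le h1 _) (by positivity)
        have hres := final_alg (ρ := ρ ^ 2) (κ1 := κ1) (m := 2 * n) (a1 := 4) (a2 := 24 * ρ ^ 2)
          (G1 := 4 * n * C * ρ / c) (G2 := n * C ^ 2 / (2 * c ^ 2)) (G3 := L * (1 + 4 * ρ))
          (G4 := 1 / (2 * C)) (G5 := n * n * (1 + C * C / c) ^ 2 / C)
          (G6 := L * (2 * n * (1 + C ^ 2 + 2 * n))) (G7 := 4 * L)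
          hv0 hηpos hηρ (hN1.trans hτN) hSn (by norm_num) (by positivity) (by positivity)
          (by positivity) (by positivity) (by positivity) (by positivity) (by positivity) hκ10
          (by positivity) (hN2.trans (mul_le_mul_of_nonneg_right hτN (by positivity))) hvS (by
            refine le_trans ?_ hmain
            refine sub_le_sub_left ?_ _
            refine mul_le_mul_of_nonneg_right hκle ?_
            positivity)
        rw [← hB1] at hres
        linarith
    calc η ^ 2 * (h ^ 2 * v) = h ^ 2 * (η ^ 2 * v) := by ring
      _ ≤ h ^ 2 * (B1 + B2) := by gcongr
  have hGy : G y ≤ h ^ 2 * (B1 + B2) := (hxmax hyD).trans hGx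
  have hy32 := hDx hyD
  have hy2 := h32 hy32
  have hyΩ := hBΩ hy2
  have hVy : VV u h y ≤ h ^ 2 * ((B1 + B2) / (ρ ^ 2) ^ 2) := by
    have e1 : G y = (ρ ^ 2) ^ 2 * VV u h y := by simp [hG]
    rw [e1] at hGy
    rw [← mul_div_assoc, le_div_iff₀ (by positivity)]
    linarith
  have hly : lapl u y ≤ T := by
    have e2 : |VV u h y - h ^ 2 * lapl u y| ≤ h ^ 2 := (hh y hy32).2.2
    have e3 := (abs_le.1 e2).1
    refine le_of_mul_le_mul_left (?_ : h ^ 2 * lapl u y ≤ h ^ 2 * T) hh2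
    rw [hT]
    linarith
  obtain ⟨-, hfrob⟩ := frob_le hkn (Au_herm hΩ hu hyΩ) (heq y hyΩ).2
  have htry : (Au u y).trace ≤ T := by
    rw [Au_trace]
    have : 0 ≤ n * (normSq (grad u y) / (2 * u y)) := mul_nonneg hn1.le (hQle y hy2).1
    linarith
  refine matNorm_le _ _ (fun i j => ?_) (by positivity)
  have e4 : hess u y i j = Au u y i j
      + (normSq (grad u y) / (2 * u y)) * (1 : Matrix (Fin n) (Fin n) ℝ) i j := by
    simp [Au]
  rw [e4]
  refine (abs_add_le _ _).trans (add_le_add ((hfrob i j).trans htry) ?_)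
  rw [abs_mul, abs_of_nonneg (hQle y hy2).1]
  refine le_trans ?_ (hQle y hy2).2
  refine mul_le_of_le_one_right (hQle y hy2).1 ?_
  rw [Matrix.one_apply]
  split_ifs <;> simp

theorem final_thm
    {n : ℕ} (hn : 3 ≤ n) (k : ℕ) (hk2 : 2 ≤ k) (hkn : k ≤ n)
    (Ω : Set (Fin n → ℝ)) (hΩ : IsOpen Ω)
    (p : ℝ) (hp : (k * n : ℝ) / 2 < p)
    (f : ((Fin n → ℝ) × ℝ × (Fin n → ℝ)) → ℝ)
    (hfpos : ∀ y ∈ Ω ×ˢ ((Ioi (0 : ℝ)) ×ˢ (univ : Set (Fin n → ℝ))), 0 < f y)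
    (hf : C11On f (Ω ×ˢ ((Ioi (0 : ℝ)) ×ˢ (univ : Set (Fin n → ℝ)))))
    (x₀ : Fin n → ℝ) (R : ℝ) (hR : 0 < R)
    (hball : closure (ball x₀ (2 * R)) ⊆ Ω)
    (M : ℝ) (hM : 0 < M) :
    ∃ C : ℝ, ∀ u : (Fin n → ℝ) → ℝ,
      ContDiffOn ℝ 2 u Ω →
      (∀ x ∈ Ω, 0 < u x) →
      (∀ x ∈ Ω,
        esymmMat k (hess u x -
            (normSq (grad u x) / (2 * u x)) • (1 : Matrix (Fin n) (Fin n) ℝ))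
          = f (x, u x, grad u x) ^ k ∧
        GammaPlus k (hess u x -
            (normSq (grad u x) / (2 * u x)) • (1 : Matrix (Fin n) (Fin n) ℝ))) →
      W2pNorm p (fun x => Real.log (u x)) (ball x₀ (2 * R)) ≤ M →
      ∀ x ∈ ball x₀ R, matNorm (hess u x) ≤ C := by
  obtain ⟨k, rfl⟩ : ∃ k', k = k' + 2 := ⟨k - 2, by omega⟩
  have hpn : (n : ℝ) < p := by
    refine lt_of_le_of_lt ?_ hp
    push_cast
    have : (0:ℝ) ≤ k * n := by positivity
    linarith
  exact main_est k hkn Ω hΩ p hpn f hfpos hf x₀ R hR hball M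


/-- Interior Hessian estimate for the positive `σ_k`-Yamabe equation
(a priori form of Theorem 1.1). -/
theorem interior_hessian_estimate_positive_sigmak_yamabe
    {n : ℕ} (hn : 3 ≤ n) (k : ℕ) (hk2 : 2 ≤ k) (hkn : k ≤ n)
    (Ω : Set (Fin n → ℝ)) (hΩ : IsOpen Ω)
    (p : ℝ) (hp : (k * n : ℝ) / 2 < p)
    (f : ((Fin n → ℝ) × ℝ × (Fin n → ℝ)) → ℝ)
    (hfpos : ∀ y ∈ Ω ×ˢ ((Ioi (0 : ℝ)) ×ˢ (univ : Set (Fin n → ℝ))), 0 < f y)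
    (hf : C11On f (Ω ×ˢ ((Ioi (0 : ℝ)) ×ˢ (univ : Set (Fin n → ℝ)))))
    (x₀ : Fin n → ℝ) (R : ℝ) (hR : 0 < R)
    (hball : closure (ball x₀ (2 * R)) ⊆ Ω)
    (M : ℝ) (hM : 0 < M) :
    ∃ C : ℝ, ∀ u : (Fin n → ℝ) → ℝ,
      ContDiffOn ℝ 2 u Ω →
      (∀ x ∈ Ω, 0 < u x) →
      (∀ x ∈ Ω,
        esymmMat k (hess u x -
            (normSq (grad u x) / (2 * u x)) • (1 : Matrix (Fin n) (Fin n) ℝ))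
          = f (x, u x, grad u x) ^ k ∧
        GammaPlus k (hess u x -
            (normSq (grad u x) / (2 * u x)) • (1 : Matrix (Fin n) (Fin n) ℝ))) →
      W2pNorm p (fun x => Real.log (u x)) (ball x₀ (2 * R)) ≤ M →
      ∀ x ∈ ball x₀ R, matNorm (hess u x) ≤ C := by
  exact final_thm hn k hk2 hkn Ω hΩ p hp f hfpos hf x₀ R hR hball M hM
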